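/- arXiv:1904.02236 — 5 statements merged into one kernel-verified Lean document; each statement's English description precedes it below -/
import Mathlib

section
/- Let g₀ be a complete warped Berger metric on ℝ⁴ with bounded curvature and c ≤ b. Then for any s₀ > 0 there exists δ > 0 such that b(s) ≥ δ for all s ≥ s₀. -/
open Set Filter Topology

noncomputable section

/-- A complete warped Berger metric on `ℝ⁴`,
`g = ds² + b²(s)(σ₁² + σ₂²) + c²(s) σ₃²` in the arclength coordinate `s ∈ (0,∞)`,
given by smooth positive functions `b, c` on `(0,∞)` extending to smooth odd functions
at `s = 0` with `b_s(0) = c_s(0) = 1`, satisfying the Berger ordering `c ≤ b`. -/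
structure WarpedBergerMetric where
  b : ℝ → ℝ
  c : ℝ → ℝ
  smooth_b : ContDiffOn ℝ (⊤ : ℕ∞) b (Ioi 0)
  smooth_c : ContDiffOn ℝ (⊤ : ℕ∞) c (Ioi 0)
  b_pos : ∀ s > 0, 0 < b s
  c_pos : ∀ s > 0, 0 < c s
  /-- Smoothness at the origin: `b → 0` as `s → 0⁺`. -/
  b_origin : Tendsto b (𝓝[>] 0) (𝓝 0)
  c_origin : Tendsto c (𝓝[>] 0) (𝓝 0)
  /-- Smoothness at the origin: `b_s → 1` as `s → 0⁺`. -/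
  bs_origin : Tendsto (deriv b) (𝓝[>] 0) (𝓝 1)
  cs_origin : Tendsto (deriv c) (𝓝[>] 0) (𝓝 1)
  /-- The Berger ordering `c ≤ b`. -/
  ordered : ∀ s > 0, c s ≤ b s

namespace WarpedBergerMetric

variable (g : WarpedBergerMetric)

/-- Sectional curvature `k12 = (4b² − 3c²)/b⁴ − b_s²/b²`. -/
def k12 (s : ℝ) : ℝ :=
  (4 * (g.b s) ^ 2 - 3 * (g.c s) ^ 2) / (g.b s) ^ 4 - (deriv g.b s) ^ 2 / (g.b s) ^ 2
/-- Sectional curvature `k13 = c²/b⁴ − b_s c_s/(b c)`. -/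
def k13 (s : ℝ) : ℝ :=
  (g.c s) ^ 2 / (g.b s) ^ 4 - deriv g.b s * deriv g.c s / (g.b s * g.c s)
/-- Sectional curvature `k01 = −b_ss/b`. -/
def k01 (s : ℝ) : ℝ := -(deriv (deriv g.b) s) / g.b s
/-- Sectional curvature `k03 = −c_ss/c`. -/
def k03 (s : ℝ) : ℝ := -(deriv (deriv g.c) s) / g.c s
/-- `|Rm| = |k12| + |k13| + |k01| + |k03|`. -/
def RmNorm (s : ℝ) : ℝ := |g.k12 s| + |g.k13 s| + |g.k01 s| + |g.k03 s|

/-- Bounded curvature: `|Rm| ≤ α` on `(0,∞)` for some `α > 0`. -/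
def BoundedCurvature : Prop := ∃ α > 0, ∀ s > 0, g.RmNorm s ≤ α

end WarpedBergerMetric

/-- The bound on `k12` and `c ≤ b` give `1 - α b² ≤ b_s²`. -/
theorem wb_key (g : WarpedBergerMetric) {α : ℝ} (h : ∀ s > 0, g.RmNorm s ≤ α) (s : ℝ)
    (hs : 0 < s) : 1 - α * (g.b s) ^ 2 ≤ (deriv g.b s) ^ 2 := by
  have hb := g.b_pos s hs
  have hc := g.c_pos s hs
  have hcb := g.ordered s hs
  have h1 : g.k12 s ≤ α := by
    have := h s hs
    unfold WarpedBergerMetric.RmNorm at this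
    linarith [le_abs_self (g.k12 s), abs_nonneg (g.k13 s), abs_nonneg (g.k01 s),
      abs_nonneg (g.k03 s)]
  unfold WarpedBergerMetric.k12 at h1
  have h2 : 1 / (g.b s) ^ 2 ≤ (4 * (g.b s) ^ 2 - 3 * (g.c s) ^ 2) / (g.b s) ^ 4 := by
    rw [div_le_div_iff₀ (by positivity) (by positivity)]
    have h3 : (g.c s) ^ 2 ≤ (g.b s) ^ 2 := by gcongr
    nlinarith [sq_nonneg (g.b s)]
  have h4 : (1 - (deriv g.b s) ^ 2) / (g.b s) ^ 2 ≤ α := by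
    rw [sub_div]; linarith
  rw [div_le_iff₀ (by positivity)] at h4
  linarith

/-- for any `s₀ > 0` there exists `δ > 0` with `b(s) ≥ δ` for all `s ≥ s₀`. -/
theorem warpedBerger_b_lower_bound (g : WarpedBergerMetric) (hBC : g.BoundedCurvature) :
    ∀ s₀ > 0, ∃ δ > 0, ∀ s ≥ s₀, δ ≤ g.b s := by
  obtain ⟨α, hα, h⟩ := hBC
  intro s₀ hs₀
  have hcont : ContinuousOn g.b (Ioi 0) := g.smooth_b.continuousOn
  have hdiff : DifferentiableOn ℝ g.b (Ioi 0) := g.smooth_b.differentiableOn (by simp)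
  refine ⟨min (g.b s₀) (1 / (2 * (α + 1))), lt_min (g.b_pos _ hs₀) (by positivity), ?_⟩
  intro s₁ hs₁
  by_contra! hlt
  obtain ⟨hlt0, hltr⟩ := lt_min_iff.mp hlt
  have hsmall : ∀ t > 0, g.b t ≤ g.b s₁ → 3 / 4 ≤ (deriv g.b t) ^ 2 := by
    intro t ht hts
    have hk := wb_key g h t ht
    have hb := g.b_pos t ht
    have h1 : g.b t * (2 * (α + 1)) < 1 := by
      rw [← lt_div_iff₀ (by positivity)]; linarith
    have h2 : (g.b t * (2 * (α + 1))) ^ 2 < 1 := by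
      have : 0 < g.b t * (2 * (α + 1)) := by positivity
      nlinarith
    have h3 : α * (g.b t) ^ 2 ≤ 1 / 4 := by
      have : 0 ≤ (g.b t) ^ 2 * (α ^ 2 + α + 1) := by positivity
      nlinarith
    linarith
  -- the minimum over `[s₀, S]` is at `S`
  have hmin : ∀ S ≥ s₁, g.b S ≤ g.b s₁ := by
    intro S hS
    have hsub : Icc s₀ S ⊆ Ioi 0 := fun x hx => lt_of_lt_of_le hs₀ hx.1
    obtain ⟨m, hm, hmm⟩ := isCompact_Icc.exists_isMinOn
      (⟨s₁, hs₁, hS⟩ : (Icc s₀ S).Nonempty) (hcont.mono hsub)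
    have hm1 : g.b m ≤ g.b s₁ := hmm ⟨hs₁, hS⟩
    rcases eq_or_lt_of_le hm.2 with he | hmS
    · rw [← he]; exact hm1
    rcases eq_or_lt_of_le hm.1 with he | hms
    · rw [← he] at hm1; linarith
    have hloc : IsLocalMin g.b m := hmm.isLocalMin (Icc_mem_nhds hms hmS)
    have := hsmall m (hsub hm) hm1
    rw [hloc.deriv_eq_zero] at this
    norm_num at this
  have hb1 := g.b_pos s₁ (lt_of_lt_of_le hs₀ hs₁)
  have hsub : Icc s₁ (s₁ + 2 * g.b s₁) ⊆ Ioi 0 :=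
    fun x hx => lt_of_lt_of_le hs₀ (le_trans hs₁ hx.1)
  obtain ⟨t, ht, hslope⟩ := exists_deriv_eq_slope g.b
    (show s₁ < s₁ + 2 * g.b s₁ by linarith) (hcont.mono hsub)
    (hdiff.mono (Ioo_subset_Icc_self.trans hsub))
  have h1 := hsmall t (hsub (Ioo_subset_Icc_self ht)) (hmin t ht.1.le)
  have h2 := hmin (s₁ + 2 * g.b s₁) (by linarith)
  have h3 := g.b_pos (s₁ + 2 * g.b s₁) (by linarith)
  have h4 : deriv g.b t ≤ 0 := by
    rw [hslope]; exact div_nonpos_of_nonpos_of_nonneg (by linarith) (by linarith)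
  have h5 : -(1 / 2) ≤ deriv g.b t := by
    rw [hslope, le_div_iff₀ (by linarith)]; linarith
  nlinarith
end
end

section
/- Let g₀ be a complete warped Berger metric on ℝ⁴ with bounded curvature and c ≤ b. Then for any s₀ > 0 there exists α > 0 such that |b_s/b|(s) ≤ α for all s ≥ s₀. -/
open Set Filter Topology

noncomputable section

/-- for any `s₀ > 0` there exists `α > 0` with `|b_s/b|(s) ≤ α` for all
`s ≥ s₀`. -/
theorem warpedBerger_bs_over_b_bounded (g : WarpedBergerMetric) (hBC : g.BoundedCurvature) :
    ∀ s₀ > 0, ∃ α > 0, ∀ s ≥ s₀, |deriv g.b s / g.b s| ≤ α := by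
  intro s₀ hs₀
  obtain ⟨A, hA, hb⟩ := hBC
  -- second derivative bound, with `k = A + 1`
  obtain ⟨k, hk⟩ : ∃ k, k = A + 1 := ⟨_, rfl⟩
  have hk0 : 0 < k := by linarith
  have hkA : A ≤ k ^ 2 := by rw [hk]; nlinarith
  have hdd : ∀ t > 0, deriv (deriv g.b) t ≤ k ^ 2 * g.b t := by
    intro t ht
    have h1 := hb t ht
    have h2 : |g.k01 t| ≤ A := by
      have := abs_nonneg (g.k12 t)
      have := abs_nonneg (g.k13 t)
      have := abs_nonneg (g.k03 t)
      unfold WarpedBergerMetric.RmNorm at h1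
      linarith
    have h3 := (abs_le.mp h2).1
    have hbt := g.b_pos t ht
    unfold WarpedBergerMetric.k01 at h3
    rw [le_div_iff₀ hbt] at h3
    nlinarith
  have hd1 : ∀ t > 0, HasDerivAt g.b (deriv g.b t) t := by
    intro t ht
    exact ((g.smooth_b.contDiffAt (Ioi_mem_nhds ht)).differentiableAt (by simp)).hasDerivAt
  have hd2 : ∀ t > 0, HasDerivAt (deriv g.b) (deriv (deriv g.b) t) t := by
    intro t ht
    have h := g.smooth_b.deriv_of_isOpen (m := ((⊤ : ℕ∞) : WithTop ℕ∞)) isOpen_Ioi le_rfl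
    exact ((h.contDiffAt (Ioi_mem_nhds ht)).differentiableAt (by simp)).hasDerivAt
  -- the Wronskian with `sinh (k (t - a))`
  have hf : ∀ a, ∀ t > 0, HasDerivAt
      (fun t => deriv g.b t * Real.sinh (k * (t - a)) - k * g.b t * Real.cosh (k * (t - a)))
      ((deriv (deriv g.b) t - k ^ 2 * g.b t) * Real.sinh (k * (t - a))) t := by
    intro a t ht
    have hl : HasDerivAt (fun t : ℝ => k * (t - a)) k t := by
      simpa using ((hasDerivAt_id t).sub_const a).const_mul k
    have := ((hd2 t ht).mul hl.sinh).sub (((hd1 t ht).const_mul k).mul hl.cosh)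
    refine this.congr_deriv ?_
    ring
  obtain ⟨δ, hδ⟩ : ∃ δ, δ = s₀ / 2 := ⟨_, rfl⟩
  have hδ0 : 0 < δ := by linarith
  have hS : 0 < Real.sinh (k * δ) := Real.sinh_pos_iff.mpr (by positivity)
  have hC : 0 < Real.cosh (k * δ) := Real.cosh_pos _
  refine ⟨k * Real.cosh (k * δ) / Real.sinh (k * δ), by positivity, ?_⟩
  intro s hs
  have hs0 : 0 < s := by linarith
  have hbs := g.b_pos s hs0
  rw [abs_le]
  constructor
  · have hm : MonotoneOn (fun t => deriv g.b t * Real.sinh (k * (t - (s + δ)))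
        - k * g.b t * Real.cosh (k * (t - (s + δ)))) (Icc s (s + δ)) := by
      apply monotoneOn_of_deriv_nonneg (convex_Icc _ _)
      · intro t ht
        exact (hf _ t (by linarith [ht.1])).continuousAt.continuousWithinAt
      · intro t ht
        rw [interior_Icc] at ht
        exact (hf _ t (by linarith [ht.1])).differentiableAt.differentiableWithinAt
      · intro t ht
        rw [interior_Icc] at ht
        rw [(hf _ t (by linarith [ht.1])).deriv]
        apply mul_nonneg_of_nonpos_of_nonpos
        · linarith [hdd t (by linarith [ht.1])]
        · exact Real.sinh_nonpos_iff.mpr (by nlinarith [ht.2])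
    have h := hm (left_mem_Icc.mpr (by linarith)) (right_mem_Icc.mpr (by linarith))
      (by linarith : s ≤ s + δ)
    have hbe := g.b_pos (s + δ) (by linarith)
    have e : k * (s - (s + δ)) = -(k * δ) := by ring
    simp only [e, sub_self, mul_zero, Real.sinh_zero, Real.cosh_zero, Real.sinh_neg,
      Real.cosh_neg, mul_one] at h
    rw [← neg_div, div_le_div_iff₀ hS hbs]
    nlinarith [mul_pos hk0 hbe]
  · have hm : AntitoneOn (fun t => deriv g.b t * Real.sinh (k * (t - (s - δ)))
        - k * g.b t * Real.cosh (k * (t - (s - δ)))) (Icc (s - δ) s) := by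
      apply antitoneOn_of_deriv_nonpos (convex_Icc _ _)
      · intro t ht
        exact (hf _ t (by linarith [ht.1])).continuousAt.continuousWithinAt
      · intro t ht
        rw [interior_Icc] at ht
        exact (hf _ t (by linarith [ht.1])).differentiableAt.differentiableWithinAt
      · intro t ht
        rw [interior_Icc] at ht
        rw [(hf _ t (by linarith [ht.1])).deriv]
        apply mul_nonpos_of_nonpos_of_nonneg
        · linarith [hdd t (by linarith [ht.1])]
        · exact Real.sinh_nonneg_iff.mpr (by nlinarith [ht.1])
    have h := hm (left_mem_Icc.mpr (by linarith)) (right_mem_Icc.mpr (by linarith))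
      (by linarith : s - δ ≤ s)
    have hbe := g.b_pos (s - δ) (by linarith)
    have e : k * (s - (s - δ)) = k * δ := by ring
    simp only [e, sub_self, mul_zero, Real.sinh_zero, Real.cosh_zero, mul_one] at h
    rw [div_le_div_iff₀ hbs hS]
    nlinarith [mul_pos hk0 hbe]
end
end

section
/- Let g₀ be a complete warped Berger metric on ℝ⁴ with bounded curvature and c ≤ b. Then there exist M > 0 and α > 0 such that |c_s(s)| + |b_s(s)| ≤ M·exp(α s) for all s > 0. -/
open Set Filter Topology

noncomputable section

/-- Energy estimate: a function whose second derivative is bounded by a multiple of itself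
has a derivative of at most exponential growth. -/
theorem energy_exp_bound (f : ℝ → ℝ) (α : ℝ) (hα : 0 < α)
    (hf : ContDiffOn ℝ (⊤ : ℕ∞) f (Ioi 0))
    (h0 : Tendsto f (𝓝[>] 0) (𝓝 0)) (h1 : Tendsto (deriv f) (𝓝[>] 0) (𝓝 1))
    (h2 : ∀ s > 0, |deriv (deriv f) s| ≤ α * |f s|) :
    ∀ s > 0, |deriv f s| ≤ 2 * Real.exp ((1 + α) * s) := by
  have hd1 : ∀ s > 0, HasDerivAt f (deriv f s) s := by
    intro s hs
    have h := (hf.contDiffAt (Ioi_mem_nhds hs)).differentiableAt (by simp)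
    exact h.hasDerivAt
  have hd2 : ∀ s > 0, HasDerivAt (deriv f) (deriv (deriv f) s) s := by
    intro s hs
    have h : ContDiffOn ℝ 1 (deriv f) (Ioi 0) :=
      hf.deriv_of_isOpen (m := 1) isOpen_Ioi (WithTop.coe_le_coe.2 (le_top : (1 + 1 : ℕ∞) ≤ ⊤))
    exact ((h.contDiffAt (Ioi_mem_nhds hs)).differentiableAt (by simp)).hasDerivAt
  set F : ℝ → ℝ := fun s => (f s ^ 2 + deriv f s ^ 2) * Real.exp (-((1 + α) * s)) with hF
  have hFd : ∀ s > 0, HasDerivAt F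
      ((2 * f s * deriv f s + 2 * deriv f s * deriv (deriv f) s) * Real.exp (-((1 + α) * s))
        + (f s ^ 2 + deriv f s ^ 2) * (Real.exp (-((1 + α) * s)) * (-(1 + α)))) s := by
    intro s hs
    have he : HasDerivAt (fun s : ℝ => Real.exp (-((1 + α) * s)))
        (Real.exp (-((1 + α) * s)) * (-(1 + α))) s := by
      have := (((hasDerivAt_id s).const_mul (1 + α)).neg).exp
      simpa using this
    have hA := ((hd1 s hs).pow 2).add ((hd2 s hs).pow 2)
    refine (hA.mul he).congr_deriv ?_
    simp
  have hanti : AntitoneOn F (Ioi 0) := by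
    apply antitoneOn_of_deriv_nonpos (convex_Ioi 0)
    · exact fun s hs => (hFd s hs).continuousAt.continuousWithinAt
    · rw [interior_Ioi]
      exact fun s hs => (hFd s hs).differentiableAt.differentiableWithinAt
    · rw [interior_Ioi]
      intro s hs
      rw [(hFd s hs).deriv]
      have hp := Real.exp_pos (-((1 + α) * s))
      have a1 : f s * deriv f s ≤ |f s| * |deriv f s| := by
        rw [← abs_mul]; exact le_abs_self _
      have a2 : deriv f s * deriv (deriv f) s ≤ |deriv f s| * (α * |f s|) := by
        refine (le_abs_self _).trans ?_
        rw [abs_mul]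
        exact mul_le_mul_of_nonneg_left (h2 s hs) (abs_nonneg _)
      have a3 : 2 * (|f s| * |deriv f s|) ≤ f s ^ 2 + deriv f s ^ 2 := by
        have := sq_nonneg (|f s| - |deriv f s|)
        rw [← sq_abs (f s), ← sq_abs (deriv f s)]
        linarith
      have a4 : (2 * f s * deriv f s + 2 * deriv f s * deriv (deriv f) s)
          - (1 + α) * (f s ^ 2 + deriv f s ^ 2) ≤ 0 := by
        have := mul_le_mul_of_nonneg_left a3 (by linarith : 0 ≤ 1 + α)
        linarith
      have := mul_nonpos_of_nonpos_of_nonneg a4 hp.le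
      linarith
  have hlim : Tendsto F (𝓝[>] 0) (𝓝 1) := by
    have he : Tendsto (fun s : ℝ => Real.exp (-((1 + α) * s))) (𝓝[>] 0) (𝓝 1) := by
      have : Continuous (fun s : ℝ => Real.exp (-((1 + α) * s))) := by fun_prop
      have h := (this.tendsto 0).mono_left (nhdsWithin_le_nhds (s := Ioi 0))
      simpa using h
    have := ((h0.pow 2).add (h1.pow 2)).mul he
    simpa using this
  intro s hs
  have hle : F s ≤ 1 := by
    refine ge_of_tendsto hlim ?_
    filter_upwards [Ioo_mem_nhdsGT hs] with t ht
    exact hanti ht.1 hs ht.2.le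
  have hE : f s ^ 2 + deriv f s ^ 2 ≤ Real.exp ((1 + α) * s) := by
    have hle' : (f s ^ 2 + deriv f s ^ 2) * Real.exp (-((1 + α) * s)) ≤ 1 := hle
    rw [Real.exp_neg, ← div_eq_mul_inv, div_le_one (Real.exp_pos _)] at hle'
    exact hle'
  have h1e : 1 ≤ Real.exp ((1 + α) * s) := Real.one_le_exp (by positivity)
  have := sq_nonneg (|deriv f s| - 1)
  have h3 := sq_abs (deriv f s)
  have h4 := abs_nonneg (deriv f s)
  nlinarith [sq_nonneg (f s), sq_nonneg (deriv f s)]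

/-- there exist `M > 0` and `α > 0` with
`|c_s(s)| + |b_s(s)| ≤ M exp(α s)` for all `s > 0`. -/
theorem warpedBerger_derivatives_exponentially_bounded (g : WarpedBergerMetric)
    (hBC : g.BoundedCurvature) :
    ∃ M > 0, ∃ α > 0, ∀ s > 0,
      |deriv g.c s| + |deriv g.b s| ≤ M * Real.exp (α * s) := by
  obtain ⟨α, hα, h⟩ := hBC
  have key : ∀ x y : ℝ, 0 < y → |-x / y| ≤ α → |x| ≤ α * |y| := by
    intro x y hy hxy
    rw [abs_div, abs_neg, div_le_iff₀ (abs_pos.mpr hy.ne')] at hxy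
    exact hxy
  have hb := energy_exp_bound g.b α hα g.smooth_b g.b_origin g.bs_origin (by
    intro s hs
    refine key _ _ (g.b_pos s hs) ?_
    have h' := h s hs
    unfold WarpedBergerMetric.RmNorm at h'
    change |g.k01 s| ≤ α
    linarith [abs_nonneg (g.k12 s), abs_nonneg (g.k13 s), abs_nonneg (g.k03 s)])
  have hc := energy_exp_bound g.c α hα g.smooth_c g.c_origin g.cs_origin (by
    intro s hs
    refine key _ _ (g.c_pos s hs) ?_
    have h' := h s hs
    unfold WarpedBergerMetric.RmNorm at h'
    change |g.k03 s| ≤ α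
    linarith [abs_nonneg (g.k12 s), abs_nonneg (g.k13 s), abs_nonneg (g.k01 s)])
  refine ⟨4, by norm_num, 1 + α, by linarith, fun s hs => ?_⟩
  linarith [hb s hs, hc s hs]
end
end

section
/- Let (ℝ⁴, g(t)) for t ∈ [0,T) be a warped Berger Ricci flow with bounded curvature starting at g₀ ∈ 𝒢. Then sup_x b(x,t) ≤ sup_x b(x,0) for every t ∈ [0,T); moreover T ≤ (sup_x b²(x,0))/4. -/
open Set Filter Topology MeasureTheory

noncomputable section

/-- Spatial derivative with respect to arclength: `f_s = ξ⁻¹ ∂ₓ f`. -/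
def dS (ξ f : ℝ → ℝ → ℝ) (x t : ℝ) : ℝ := (ξ x t)⁻¹ * deriv (fun y => f y t) x

/-- A warped Berger Ricci flow on `ℝ⁴` over `[0,T)`, described by smooth positive radial
functions `ξ, b, c` of the radial coordinate `x ∈ (0,∞)` and time `t ∈ [0,T)`,
satisfying the Ricci flow equations, completeness, the smoothness boundary conditions
at the origin of `ℝ⁴`, and the Berger ordering `c ≤ b` at `t = 0`. -/
structure WarpedBergerFlow where
  T : ℝ
  T_pos : 0 < T
  ξ : ℝ → ℝ → ℝ
  b : ℝ → ℝ → ℝ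
  c : ℝ → ℝ → ℝ
  smooth_ξ : ContDiffOn ℝ (⊤ : ℕ∞) (fun p : ℝ × ℝ => ξ p.1 p.2) (Ioi 0 ×ˢ Ico 0 T)
  smooth_b : ContDiffOn ℝ (⊤ : ℕ∞) (fun p : ℝ × ℝ => b p.1 p.2) (Ioi 0 ×ˢ Ico 0 T)
  smooth_c : ContDiffOn ℝ (⊤ : ℕ∞) (fun p : ℝ × ℝ => c p.1 p.2) (Ioi 0 ×ˢ Ico 0 T)
  ξ_pos : ∀ x > 0, ∀ t ∈ Ico (0:ℝ) T, 0 < ξ x t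
  b_pos : ∀ x > 0, ∀ t ∈ Ico (0:ℝ) T, 0 < b x t
  c_pos : ∀ x > 0, ∀ t ∈ Ico (0:ℝ) T, 0 < c x t
  /-- Ricci flow equation for `b`:
  `b_t = b_ss + (c_s/c + b_s/b) b_s + 2(c² − 2b²)/b³`. -/
  eq_b : ∀ x > 0, ∀ t ∈ Ico (0:ℝ) T,
    deriv (fun u => b x u) t =
      dS ξ (dS ξ b) x t + (dS ξ c x t / c x t + dS ξ b x t / b x t) * dS ξ b x t
        + 2 * ((c x t) ^ 2 - 2 * (b x t) ^ 2) / (b x t) ^ 3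
  /-- Ricci flow equation for `c`: `c_t = c_ss + 2 (b_s/b) c_s − 2c³/b⁴`. -/
  eq_c : ∀ x > 0, ∀ t ∈ Ico (0:ℝ) T,
    deriv (fun u => c x u) t =
      dS ξ (dS ξ c) x t + 2 * (dS ξ b x t / b x t) * dS ξ c x t
        - 2 * (c x t) ^ 3 / (b x t) ^ 4
  /-- Ricci flow equation for `ξ`: `ξ_t = −ξ (2 b_ss/b + c_ss/c)`. -/
  eq_ξ : ∀ x > 0, ∀ t ∈ Ico (0:ℝ) T,
    deriv (fun u => ξ x u) t =
      -(ξ x t) * (2 * dS ξ (dS ξ b) x t / b x t + dS ξ (dS ξ c) x t / c x t)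
  /-- Completeness: the arclength `s(x,t) = ∫₀ˣ ξ(y,t) dy` tends to `∞` as `x → ∞`. -/
  complete : ∀ t ∈ Ico (0:ℝ) T,
    Tendsto (fun x => ∫ y in (0:ℝ)..x, ξ y t) atTop atTop
  /-- Smoothness at the origin: `b → 0` as `x → 0⁺`. -/
  b_origin : ∀ t ∈ Ico (0:ℝ) T, Tendsto (fun x => b x t) (𝓝[>] 0) (𝓝 0)
  c_origin : ∀ t ∈ Ico (0:ℝ) T, Tendsto (fun x => c x t) (𝓝[>] 0) (𝓝 0)
  /-- Smoothness at the origin: `b_s → 1` as `x → 0⁺`. -/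
  bs_origin : ∀ t ∈ Ico (0:ℝ) T, Tendsto (fun x => dS ξ b x t) (𝓝[>] 0) (𝓝 1)
  cs_origin : ∀ t ∈ Ico (0:ℝ) T, Tendsto (fun x => dS ξ c x t) (𝓝[>] 0) (𝓝 1)
  /-- The Berger ordering `c ≤ b` holds at `t = 0`. -/
  ordered_init : ∀ x > 0, c x 0 ≤ b x 0

namespace WarpedBergerFlow

variable (F : WarpedBergerFlow)

/-- `b_s`. -/
def bS : ℝ → ℝ → ℝ := dS F.ξ F.b
/-- `c_s`. -/
def cS : ℝ → ℝ → ℝ := dS F.ξ F.c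
/-- `b_ss`. -/
def bSS : ℝ → ℝ → ℝ := dS F.ξ (dS F.ξ F.b)
/-- `c_ss`. -/
def cSS : ℝ → ℝ → ℝ := dS F.ξ (dS F.ξ F.c)

/-- Sectional curvature `k12 = (4b² − 3c²)/b⁴ − b_s²/b²`. -/
def k12 (x t : ℝ) : ℝ :=
  (4 * (F.b x t) ^ 2 - 3 * (F.c x t) ^ 2) / (F.b x t) ^ 4 - (F.bS x t) ^ 2 / (F.b x t) ^ 2
/-- Sectional curvature `k13 = c²/b⁴ − b_s c_s/(b c)`. -/
def k13 (x t : ℝ) : ℝ :=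
  (F.c x t) ^ 2 / (F.b x t) ^ 4 - F.bS x t * F.cS x t / (F.b x t * F.c x t)
/-- Sectional curvature `k01 = −b_ss/b`. -/
def k01 (x t : ℝ) : ℝ := -(F.bSS x t) / F.b x t
/-- Sectional curvature `k03 = −c_ss/c`. -/
def k03 (x t : ℝ) : ℝ := -(F.cSS x t) / F.c x t
/-- `|Rm| = |k12| + |k13| + |k01| + |k03|`. -/
def RmNorm (x t : ℝ) : ℝ := |F.k12 x t| + |F.k13 x t| + |F.k01 x t| + |F.k03 x t|
/-- Mean curvature of the Euclidean hypersphere of radius `x`: `H = 2 b_s/b + c_s/c`. -/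
def meanH (x t : ℝ) : ℝ := 2 * F.bS x t / F.b x t + F.cS x t / F.c x t

/-- Bounded curvature: `|Rm|` is bounded on `(0,∞) × [0,t₀]` for every `t₀ < T`. -/
def BoundedCurvature : Prop :=
  ∀ t₀ ∈ Ico (0:ℝ) F.T, ∃ C : ℝ, ∀ x > 0, ∀ t ∈ Icc (0:ℝ) t₀, F.RmNorm x t ≤ C

/-- The initial metric belongs to the class `𝒢`: at `t = 0`, `b_s ≥ 0` and `H ≥ 0`
everywhere, `b(·,0)` is bounded, and `|Rm|(·,0)` is bounded. -/
def InG : Prop :=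
  (∀ x > 0, 0 ≤ F.bS x 0) ∧ (∀ x > 0, 0 ≤ F.meanH x 0) ∧
  (∃ M : ℝ, ∀ x > 0, F.b x 0 ≤ M) ∧ (∃ C : ℝ, ∀ x > 0, F.RmNorm x 0 ≤ C)

end WarpedBergerFlow

/-- One-sided derivative test: a left maximum has nonnegative derivative. -/
theorem aux_left_max {ψ : ℝ → ℝ} {d a t : ℝ} (hat : a < t) (hd : HasDerivAt ψ d t)
    (h : ∀ u ∈ Ico a t, ψ u ≤ ψ t) : 0 ≤ d := by
  by_contra hneg
  push Not at hneg
  have h1 : Tendsto (slope ψ t) (𝓝[<] t) (𝓝 d) :=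
    (hasDerivWithinAt_iff_tendsto_slope' (s := Iio t) (by simp)).1 hd.hasDerivWithinAt
  have h2 : ∀ᶠ u in 𝓝[<] t, slope ψ t u < 0 := h1.eventually (gt_mem_nhds hneg)
  have h3 : ∀ᶠ u in 𝓝[<] t, u ∈ Ico a t := Ico_mem_nhdsLT hat
  obtain ⟨u, hu1, hu2⟩ := (h2.and h3).exists
  have h4 := h u hu2
  rw [slope_def_field] at hu1
  have : 0 ≤ (ψ u - ψ t) / (u - t) :=
    div_nonneg_of_nonpos (by linarith) (by linarith [hu2.2])
  linarith

/-- Weighted second derivative test. -/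
theorem aux_second {h w q : ℝ → ℝ} {x d : ℝ} (hw : ∀ᶠ y in 𝓝 x, 0 < w y)
    (hh : ∀ᶠ y in 𝓝 x, HasDerivAt h (w y * q y) y) (hq : HasDerivAt q d x)
    (hmax : IsLocalMax h x) : q x = 0 ∧ d ≤ 0 := by
  have h0 : w x * q x = 0 := hmax.hasDerivAt_eq_zero hh.self_of_nhds
  have hwx : 0 < w x := hw.self_of_nhds
  have hqx : q x = 0 := by
    rcases mul_eq_zero.1 h0 with h | h
    · exact absurd h hwx.ne'
    · exact h
  refine ⟨hqx, ?_⟩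
  by_contra hpos
  push Not at hpos
  have h1 : Tendsto (slope q x) (𝓝[>] x) (𝓝 d) :=
    (hasDerivWithinAt_iff_tendsto_slope' (s := Ioi x) (by simp)).1 hq.hasDerivWithinAt
  have h2 : ∀ᶠ u in 𝓝[>] x, 0 < slope q x u := h1.eventually (lt_mem_nhds hpos)
  have h3 : ∀ᶠ u in 𝓝[>] x, 0 < w u ∧ HasDerivAt h (w u * q u) u ∧ h u ≤ h x :=
    (hw.and (hh.and hmax)).filter_mono nhdsWithin_le_nhds
  have h4 := (h2.and h3)
  obtain ⟨z, hz, hI⟩ := (mem_nhdsGT_iff_exists_Ioo_subset).1 h4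
  have hz' : x < z := hz
  set m := (x + z) / 2 with hm
  have hxm : x < m := by linarith
  have hmz : m < z := by linarith
  have hc : ContinuousOn h (Icc x m) := by
    intro y hy
    rcases eq_or_lt_of_le hy.1 with e | e
    · rw [← e]; exact hh.self_of_nhds.continuousAt.continuousWithinAt
    · exact (hI ⟨e, lt_of_le_of_lt hy.2 hmz⟩).2.2.1.continuousAt.continuousWithinAt
  obtain ⟨y, hy, hy2⟩ := exists_hasDerivAt_eq_slope h (fun y => w y * q y) hxm hc
    (fun y hy => (hI ⟨hy.1, hy.2.trans hmz⟩).2.2.1)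
  have hyI := hI ⟨hy.1, hy.2.trans hmz⟩
  have hmI := hI ⟨hxm, hmz⟩
  have hs : 0 < slope q x y := hyI.1
  rw [slope_def_field, hqx, sub_zero] at hs
  have hqy : 0 < q y := by
    have := mul_pos hs (sub_pos.2 hy.1)
    rwa [div_mul_cancel₀ _ (sub_pos.2 hy.1).ne'] at this
  have hp : 0 < w y * q y := mul_pos hyI.2.1 hqy
  have hn : (h m - h x) / (m - x) ≤ 0 :=
    div_nonpos_of_nonpos_of_nonneg (by linarith [hmI.2.2.2]) (by linarith)
  linarith

theorem aux_pos_sq (r : ℝ) : HasDerivAt (fun u : ℝ => (max 0 u) ^ 2) (2 * max 0 r) r := by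
  rcases lt_trichotomy r 0 with h | h | h
  · have : (fun u : ℝ => (max 0 u) ^ 2) =ᶠ[𝓝 r] fun _ => 0 := by
      filter_upwards [gt_mem_nhds h] with u hu
      simp [max_eq_left hu.le]
    rw [max_eq_left h.le, mul_zero]
    exact (hasDerivAt_const r (0:ℝ)).congr_of_eventuallyEq this
  · subst h
    rw [max_self, mul_zero, hasDerivAt_iff_isLittleO_nhds_zero]
    simp only [zero_add, max_self, smul_zero, sub_zero]
    have h1 : (fun u : ℝ => (max 0 u) ^ 2 - 0 ^ 2) =O[𝓝 0] fun u : ℝ => u ^ 2 := by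
      refine Asymptotics.IsBigO.of_bound 1 (Eventually.of_forall fun u => ?_)
      rcases le_total 0 u with hu | hu
      · simp [max_eq_right hu]
      · simp [max_eq_left hu]; positivity
    exact h1.trans_isLittleO (Asymptotics.isLittleO_pow_id (by norm_num))
  · have : (fun u : ℝ => (max 0 u) ^ 2) =ᶠ[𝓝 r] fun u => u ^ 2 := by
      filter_upwards [lt_mem_nhds h] with u hu
      simp [max_eq_right hu.le]
    rw [max_eq_right h.le]
    have h2 := (hasDerivAt_pow 2 r)
    simp only [Nat.cast_ofNat, Nat.add_one_sub_one, pow_one] at h2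
    exact h2.congr_of_eventuallyEq this

theorem aux_pos_cube (r : ℝ) :
    HasDerivAt (fun u : ℝ => (max 0 u) ^ 3) (3 * (max 0 r) ^ 2) r := by
  have h1 : (fun u : ℝ => (max 0 u) ^ 3) = fun u => u * (max 0 u) ^ 2 := by
    funext u
    rcases le_total 0 u with hu | hu
    · simp [max_eq_right hu]; ring
    · simp [max_eq_left hu]
  rw [h1]
  have h2 := (hasDerivAt_id r).mul (aux_pos_sq r)
  refine h2.congr_deriv ?_
  rcases le_total 0 r with hu | hu
  · simp [max_eq_right hu]; ring
  · simp [max_eq_left hu]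

/-- Maximum principle for warped products with bounded geometry. -/
theorem aux_mp {t0 : ℝ} (ht0 : 0 ≤ t0) {ξ f fs fss ft H : ℝ → ℝ → ℝ} {C K B : ℝ}
    (hC : 0 ≤ C) (hK : 0 ≤ K)
    (hξpos : ∀ x > 0, ∀ t ∈ Icc 0 t0, 0 < ξ x t)
    (hξc : ContinuousOn (fun p : ℝ × ℝ => ξ p.1 p.2) (Ioi 0 ×ˢ Icc 0 t0))
    (hξt : ∀ x > 0, ∀ t ∈ Icc 0 t0, ∀ t' ∈ Icc 0 t0, t ≤ t' →
      ξ x t ≤ Real.exp (C * (t' - t)) * ξ x t')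
    (hcomp : Tendsto (fun x => ∫ y in (1:ℝ)..x, ξ y 0) atTop atTop)
    (hH : ∀ x ≥ 1, ∀ t ∈ Icc 0 t0, H x t ≤ K)
    (hfc : ContinuousOn (fun p : ℝ × ℝ => f p.1 p.2) (Ioi 0 ×ˢ Icc 0 t0))
    (hfs : ∀ x > 0, ∀ t ∈ Ioc 0 t0, HasDerivAt (fun y => f y t) (ξ x t * fs x t) x)
    (hfss : ∀ x > 0, ∀ t ∈ Ioc 0 t0, HasDerivAt (fun y => fs y t) (ξ x t * fss x t) x)
    (hft : ∀ x > 0, ∀ t ∈ Ioc 0 t0, HasDerivAt (fun u => f x u) (ft x t) t)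
    (heq : ∀ x > 0, ∀ t ∈ Ioc 0 t0, 0 < f x t → ft x t ≤ fss x t + H x t * fs x t)
    (hB : ∀ x > 0, ∀ t ∈ Icc 0 t0, f x t ≤ B)
    (hinit : ∀ x > 0, f x 0 ≤ 0)
    (hzero : ∀ ε > 0, ∃ δ > 0, ∀ x > 0, x < δ → ∀ t ∈ Icc 0 t0, f x t ≤ ε) :
    ∀ x > 0, ∀ t ∈ Icc 0 t0, f x t ≤ 0 := by
  intro x1 hx1 t1 ht1
  by_contra hcon
  push Not at hcon
  -- clamped length function
  set cl : ℝ → ℝ := fun t => max 0 (min t t0) with hcl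
  have hclm : ∀ t, cl t ∈ Icc 0 t0 := fun t => ⟨le_max_left _ _, max_le ht0 (min_le_right _ _)⟩
  have hcle : ∀ t ∈ Icc 0 t0, cl t = t := fun t ht => by
    simp [hcl, min_eq_left ht.2, max_eq_right ht.1]
  set η : ℝ → ℝ → ℝ := fun t y => ξ (max y 1) (cl t) with hη
  have hηc : Continuous (Function.uncurry η) := by
    have hg : Continuous fun p : ℝ × ℝ => ((max p.2 1, cl p.1) : ℝ × ℝ) := by
      simp only [hcl]; fun_prop
    have := hξc.comp_continuous hg (fun p => ⟨lt_of_lt_of_le (one_pos (α := ℝ)) (le_max_right p.2 1), hclm _⟩)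
    exact this
  set S : ℝ → ℝ → ℝ := fun x t => ∫ y in (1:ℝ)..x, η t y with hS
  have hSc : Continuous fun p : ℝ × ℝ => S p.1 p.2 := by
    have h := intervalIntegral.continuous_parametric_primitive_of_continuous
      (μ := volume) (a₀ := (1:ℝ)) hηc
    exact h.comp continuous_swap
  have hηt : ∀ t, Continuous (η t) := fun t => by
    exact hηc.comp (by fun_prop : Continuous fun y : ℝ => (t, y))
  have hSx : ∀ x t, HasDerivAt (fun y => S y t) (η t x) x := fun x t =>
    intervalIntegral.integral_hasDerivAt_right ((hηt t).intervalIntegrable _ _)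
      ((hηt t).stronglyMeasurableAtFilter _ _) (hηt t).continuousAt
  have hηpos : ∀ t y, 0 < η t y := fun t y =>
    hξpos _ (lt_of_lt_of_le one_pos (le_max_right _ _)) _ (hclm t)
  have hSneg : ∀ x t, x ≤ 1 → S x t ≤ 0 := by
    intro x t hx
    simp only [hS]
    rw [intervalIntegral.integral_symm]
    have := intervalIntegral.integral_nonneg (μ := volume) hx (fun u _ => (hηpos t u).le)
    linarith
  have hSmono : ∀ x, 1 ≤ x → ∀ t ∈ Icc 0 t0, ∀ t' ∈ Icc 0 t0, t ≤ t' →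
      S x t ≤ Real.exp (C * (t' - t)) * S x t' := by
    intro x hx t ht t' ht' htt
    simp only [hS]
    rw [← intervalIntegral.integral_const_mul]
    refine intervalIntegral.integral_mono_on hx ((hηt t).intervalIntegrable _ _)
      ((continuous_const.mul (hηt t')).intervalIntegrable _ _) (fun y hy => ?_)
    simp only [hη, hcle t ht, hcle t' ht']
    exact hξt _ (lt_of_lt_of_le one_pos (le_max_right _ _)) t ht t' ht' htt
  set P : ℝ → ℝ → ℝ := fun x t => max 0 (S x t) with hP
  have hP0 : ∀ x t, 0 ≤ P x t := fun x t => le_max_left _ _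
  have hPneg : ∀ x t, x ≤ 1 → P x t = 0 := fun x t hx => max_eq_left (hSneg x t hx)
  have hPc : Continuous fun p : ℝ × ℝ => P p.1 p.2 := continuous_const.max hSc
  have hPmono : ∀ x, ∀ t ∈ Icc 0 t0, ∀ t' ∈ Icc 0 t0, t ≤ t' →
      P x t ≤ Real.exp (C * (t' - t)) * P x t' := by
    intro x t ht t' ht' htt
    rcases le_total x 1 with hx | hx
    · rw [hPneg x t hx, hPneg x t' hx, mul_zero]
    · refine max_le (mul_nonneg (Real.exp_pos _).le (hP0 _ _)) ?_
      exact (hSmono x hx t ht t' ht' htt).trans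
        (mul_le_mul_of_nonneg_left (le_max_right _ _) (Real.exp_pos _).le)
  set A : ℝ := 3 * C + 6 + 3 * K + 1 with hA
  set φ : ℝ → ℝ → ℝ := fun x t => Real.exp (A * t) * (1 + P x t ^ 3) with hφ
  have hA0 : 0 ≤ A := by positivity
  have hφ1 : ∀ x, ∀ t, 0 ≤ t → 1 + P x t ^ 3 ≤ φ x t := by
    intro x t ht
    have h1 : 1 ≤ Real.exp (A * t) := Real.one_le_exp (by positivity)
    have h2 : 0 ≤ 1 + P x t ^ 3 := by have := hP0 x t; positivity
    exact le_mul_of_one_le_left h2 h1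
  have hφpos : ∀ x t, 0 < φ x t := fun x t => by have := hP0 x t; positivity
  set ε : ℝ := f x1 t1 / (2 * φ x1 t1) with hε
  have hεpos : 0 < ε := div_pos hcon (by have := hφpos x1 t1; positivity)
  set h : ℝ → ℝ → ℝ := fun x t => f x t - ε * φ x t with hh
  have hh1 : 0 < h x1 t1 := by
    have : ε * φ x1 t1 = f x1 t1 / 2 := by
      rw [hε]; have := (hφpos x1 t1).ne'; field_simp
    simp only [hh, this]; linarith
  obtain ⟨δ, hδ, hδf⟩ := hzero ε hεpos
  have hnear : ∀ x > 0, x < δ → ∀ t ∈ Icc 0 t0, h x t ≤ 0 := by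
    intro x hx hxd t ht
    have h1 := hδf x hx hxd t ht
    have h2 := hφ1 x t ht.1
    have h3 : 0 ≤ P x t ^ 3 := pow_nonneg (hP0 _ _) _
    have h4 : ε * 1 ≤ ε * φ x t := mul_le_mul_of_nonneg_left (by linarith) hεpos.le
    simp only [hh]; linarith
  obtain ⟨X, hX⟩ : ∃ X, 1 ≤ X ∧ ∀ x ≥ X, Real.exp (C * t0) * max 1 (B / ε) ≤
      ∫ y in (1:ℝ)..x, ξ y 0 := by
    obtain ⟨X, hX⟩ := (eventually_atTop.1 (hcomp.eventually
      (eventually_ge_atTop (Real.exp (C * t0) * max 1 (B / ε)))))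
    exact ⟨max 1 X, le_max_left _ _, fun x hx => hX x ((le_max_right _ _).trans hx)⟩
  have h0m : (0:ℝ) ∈ Icc 0 t0 := ⟨le_refl _, ht0⟩
  have hfar : ∀ x ≥ X, ∀ t ∈ Icc 0 t0, h x t ≤ 0 := by
    intro x hx t ht
    have hx1' : 1 ≤ x := hX.1.trans hx
    have e1 : ∫ y in (1:ℝ)..x, ξ y 0 = S x 0 := by
      simp only [hS]
      refine intervalIntegral.integral_congr (fun y hy => ?_)
      rw [uIcc_of_le hx1'] at hy
      simp only [hη, hcle 0 h0m, max_eq_left hy.1]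
    have h1 := hX.2 x hx
    rw [e1] at h1
    have h2 := hPmono x 0 h0m t ht ht.1
    have h3 : S x 0 ≤ P x 0 := le_max_right _ _
    have h4 : Real.exp (C * (t - 0)) * P x t ≤ Real.exp (C * t0) * P x t := by
      refine mul_le_mul_of_nonneg_right (Real.exp_le_exp.2 ?_) (hP0 _ _)
      exact mul_le_mul_of_nonneg_left (by linarith [ht.2]) hC
    have h5 : max 1 (B / ε) ≤ P x t := by
      have : Real.exp (C * t0) * max 1 (B / ε) ≤ Real.exp (C * t0) * P x t := by linarith
      exact le_of_mul_le_mul_left this (Real.exp_pos _)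
    have h6 : 1 ≤ P x t := (le_max_left _ _).trans h5
    have h7 : B / ε ≤ P x t := (le_max_right _ _).trans h5
    have h8 : P x t ≤ P x t ^ 3 := le_self_pow₀ h6 (by norm_num)
    have h9 : B / ε ≤ φ x t := by have := hφ1 x t ht.1; linarith
    rw [div_le_iff₀ hεpos] at h9
    have := hB x (lt_of_lt_of_le one_pos hx1') t ht
    simp only [hh]; linarith
  have hx1δ : δ ≤ x1 := by
    by_contra hlt; push Not at hlt
    linarith [hnear x1 hx1 hlt t1 ht1]
  have hx1X : x1 ≤ X := by
    by_contra hlt; push Not at hlt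
    linarith [hfar x1 hlt.le t1 ht1]
  have hhc : ContinuousOn (fun p : ℝ × ℝ => h p.1 p.2) (Icc δ X ×ˢ Icc 0 t0) := by
    have h1 : ContinuousOn (fun p : ℝ × ℝ => f p.1 p.2) (Icc δ X ×ˢ Icc 0 t0) :=
      hfc.mono (prod_mono (fun y hy => lt_of_lt_of_le hδ hy.1) (le_refl _))
    have h2 : Continuous fun p : ℝ × ℝ => ε * φ p.1 p.2 := by
      simp only [hφ]
      exact continuous_const.mul
        ((Real.continuous_exp.comp (continuous_const.mul continuous_snd)).mul
          (continuous_const.add (hPc.pow 3)))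
    exact h1.sub h2.continuousOn
  obtain ⟨⟨x, t⟩, ⟨hxm, htm⟩, hmax⟩ := (isCompact_Icc.prod isCompact_Icc).exists_isMaxOn
    (⟨(x1, t1), ⟨⟨hx1δ, hx1X⟩, ht1⟩⟩ : (Icc δ X ×ˢ Icc 0 t0).Nonempty) hhc
  simp only at hxm htm
  have hxt : 0 < h x t := lt_of_lt_of_le hh1 (hmax (a := (x1, t1)) ⟨⟨hx1δ, hx1X⟩, ht1⟩)
  have hglob : ∀ y > 0, ∀ u ∈ Icc 0 t0, h y u ≤ h x t := by
    intro y hy u hu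
    by_cases hyδ : y < δ
    · linarith [hnear y hy hyδ u hu]
    by_cases hyX : X ≤ y
    · linarith [hfar y hyX u hu]
    push Not at hyδ hyX
    exact hmax (a := (y, u)) ⟨⟨hyδ, hyX.le⟩, hu⟩
  have hx0 : 0 < x := lt_of_lt_of_le hδ hxm.1
  have hfh : h x t ≤ f x t := by
    have := mul_pos hεpos (hφpos x t)
    simp only [hh]; linarith
  have ht_pos : 0 < t := by
    rcases eq_or_lt_of_le htm.1 with e | e
    · rw [← e] at hfh hxt
      linarith [hinit x hx0]
    · exact e
  have htI : t ∈ Ioc 0 t0 := ⟨ht_pos, htm.2⟩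
  set E := Real.exp (A * t) with hE
  have hEpos : 0 < E := Real.exp_pos _
  -- spatial test
  have hφx : ∀ y > 0, HasDerivAt (fun z => φ z t) (ξ y t * (E * (3 * P y t ^ 2))) y := by
    intro y hy
    have h1 := (aux_pos_cube (S y t)).comp y (hSx y t)
    have h2 := (h1.const_add 1).const_mul E
    refine h2.congr_deriv ?_
    rcases le_total y 1 with hy1 | hy1
    · have := hPneg y t hy1
      simp only [hP] at this ⊢
      rw [this]; ring
    · simp only [hP, hη, max_eq_left hy1, hcle t htm]; ring
  have hPx : HasDerivAt (fun y => E * (3 * P y t ^ 2)) (ξ x t * (E * (6 * P x t))) x := by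
    have h1 := (aux_pos_sq (S x t)).comp x (hSx x t)
    have h2 := (h1.const_mul 3).const_mul E
    refine h2.congr_deriv ?_
    rcases le_total x 1 with hy1 | hy1
    · have := hPneg x t hy1
      simp only [hP] at this ⊢
      rw [this]; ring
    · simp only [hP, hη, max_eq_left hy1, hcle t htm]; ring
  have htest := aux_second (h := fun y => h y t) (w := fun y => ξ y t)
    (q := fun y => fs y t - ε * (E * (3 * P y t ^ 2)))
    (x := x) (d := ξ x t * fss x t - ε * (ξ x t * (E * (6 * P x t))))
    (by filter_upwards [lt_mem_nhds hx0] with y hy using hξpos y hy t htm)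
    (by
      filter_upwards [lt_mem_nhds hx0] with y hy
      exact ((hfs y hy t htI).sub ((hφx y hy).const_mul ε)).congr_deriv (by ring))
    ((hfss x hx0 t htI).sub (hPx.const_mul ε))
    (by
      filter_upwards [lt_mem_nhds hx0] with y hy using hglob y hy t htm)
  obtain ⟨hq0, hd⟩ := htest
  have hξx := hξpos x hx0 t htm
  have hfss' : fss x t ≤ ε * (E * (6 * P x t)) := by
    have : ξ x t * (fss x t - ε * (E * (6 * P x t))) ≤ 0 := by
      calc _ = ξ x t * fss x t - ε * (ξ x t * (E * (6 * P x t))) := by ring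
        _ ≤ 0 := hd
    by_contra hlt; push Not at hlt
    linarith [mul_pos hξx (sub_pos.2 hlt)]
  have hfs' : fs x t = ε * (E * (3 * P x t ^ 2)) := by linarith
  -- time test
  have hψ : HasDerivAt (fun u => f x u - ε * (Real.exp (A * u) *
      (1 + (Real.exp (C * (t - u)) * P x t) ^ 3)))
      (ft x t - ε * (E * (A * (1 + P x t ^ 3) - 3 * C * P x t ^ 3))) t := by
    have a1 : HasDerivAt (fun u => Real.exp (A * u)) (E * A) t := by
      have := ((hasDerivAt_id t).const_mul A).exp
      simpa using this
    have a2 : HasDerivAt (fun u => Real.exp (C * (t - u))) (-C) t := by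
      have := (((hasDerivAt_id t).const_sub t).const_mul C).exp
      simpa using this
    have a3 := ((a2.mul_const (P x t)).pow 3).const_add 1
    have a4 := (hft x hx0 t htI).sub ((a1.mul a3).const_mul ε)
    refine a4.congr_deriv ?_
    simp only [sub_self, mul_zero, Real.exp_zero, one_mul, Pi.pow_apply, ← hE]
    push_cast
    ring
  have hd2 := aux_left_max ht_pos hψ (by
    intro u hu
    have hu' : u ∈ Icc 0 t0 := ⟨hu.1, hu.2.le.trans htm.2⟩
    have b1 := hglob x hx0 u hu'
    have b2 := hPmono x u hu' t htm hu.2.le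
    have b3 : P x u ^ 3 ≤ (Real.exp (C * (t - u)) * P x t) ^ 3 :=
      pow_le_pow_left₀ (hP0 _ _) b2 3
    have b4 : ε * φ x u ≤ ε * (Real.exp (A * u) *
      (1 + (Real.exp (C * (t - u)) * P x t) ^ 3)) := by
      simp only [hφ]
      gcongr
    have b5 : h x t = f x t - ε * (Real.exp (A * t) *
      (1 + (Real.exp (C * (t - t)) * P x t) ^ 3)) := by
      simp [hh, hφ]
    rw [← b5]
    refine le_trans ?_ b1
    simp only [hh]
    linarith)
  have hpde := heq x hx0 t htI (hxt.trans_le hfh)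
  set p := P x t with hp
  have hp0 : 0 ≤ p := hP0 x t
  have hHp : H x t * p ^ 2 ≤ K * p ^ 2 := by
    rcases le_total x 1 with hy1 | hy1
    · rw [hp, hPneg x t hy1]; simp
    · exact mul_le_mul_of_nonneg_right (hH x hy1 t htm) (sq_nonneg _)
  have hεE : 0 < ε * E := mul_pos hεpos hEpos
  have key : ε * E * (A * (1 + p ^ 3) - 3 * C * p ^ 3) ≤ ε * E * (6 * p + 3 * (H x t * p ^ 2)) := by
    rw [hfs'] at hpde
    nlinarith
  have key2 := le_of_mul_le_mul_left key hεE
  have c1 : p ≤ 1 + p ^ 3 := by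
    rcases le_total p 1 with g | g
    · have : 0 ≤ p ^ 3 := by positivity
      linarith
    · have := le_self_pow₀ g (n := 3) (by norm_num)
      linarith
  have c2 : p ^ 2 ≤ 1 + p ^ 3 := by
    rcases le_total p 1 with g | g
    · have : 0 ≤ p ^ 3 := by positivity
      have := pow_le_one₀ (n := 2) hp0 g
      linarith
    · have := pow_le_pow_right₀ g (show 2 ≤ 3 by norm_num)
      linarith
  have c3 : K * p ^ 2 ≤ K * (1 + p ^ 3) := mul_le_mul_of_nonneg_left c2 hK
  have c4 : 0 ≤ p ^ 3 := by positivity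
  rw [hA] at key2
  nlinarith

theorem aux_log_lip {g g' : ℝ → ℝ} {t0 L : ℝ} (hc : ContinuousOn g (Icc 0 t0))
    (hpos : ∀ t ∈ Icc 0 t0, 0 < g t) (hd : ∀ t ∈ Ioo 0 t0, HasDerivAt g (g' t) t)
    (hL : ∀ t ∈ Ioo 0 t0, |g' t / g t| ≤ L) :
    ∀ t ∈ Icc 0 t0, ∀ t' ∈ Icc 0 t0,
      |Real.log (g t') - Real.log (g t)| ≤ L * |t' - t| := by
  have main : ∀ t ∈ Icc 0 t0, ∀ t' ∈ Icc 0 t0, t < t' →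
      |Real.log (g t') - Real.log (g t)| ≤ L * |t' - t| := by
    intro t ht t' ht' hlt
    have hsub : Icc t t' ⊆ Icc 0 t0 := Icc_subset_Icc ht.1 ht'.2
    have hsub2 : Ioo t t' ⊆ Ioo 0 t0 := Ioo_subset_Ioo ht.1 ht'.2
    obtain ⟨u, hu, hu2⟩ := exists_hasDerivAt_eq_slope (fun u => Real.log (g u))
      (fun u => g' u / g u) hlt
      ((hc.mono hsub).log (fun u hu => (hpos u (hsub hu)).ne'))
      (fun u hu => (hd u (hsub2 hu)).log (hpos u (hsub (Ioo_subset_Icc_self hu))).ne')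
    have h1 := hL u (hsub2 hu)
    rw [hu2, abs_div, div_le_iff₀ (abs_pos.2 (sub_pos.2 hlt).ne')] at h1
    exact h1
  intro t ht t' ht'
  rcases lt_trichotomy t t' with h | h | h
  · exact main t ht t' ht' h
  · subst h; simp
  · rw [abs_sub_comm, abs_sub_comm t' t]; exact main t' ht' t ht h

theorem aux_dx {g : ℝ → ℝ → ℝ} {T x t : ℝ}
    (hg : ContDiffOn ℝ (⊤ : ℕ∞) (fun p : ℝ × ℝ => g p.1 p.2) (Ioi 0 ×ˢ Ico 0 T))
    (hx : 0 < x) (ht : t ∈ Ico 0 T) :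
    HasDerivAt (fun y => g y t)
      (fderivWithin ℝ (fun p : ℝ × ℝ => g p.1 p.2) (Ioi 0 ×ˢ Ico 0 T) (x, t) (1, 0)) x := by
  have h1 := (hg.differentiableOn (by simp) (x, t) ⟨hx, ht⟩).hasFDerivWithinAt
  have h2 : HasDerivAt (fun y : ℝ => (y, t)) ((1 : ℝ), (0 : ℝ)) x :=
    (hasDerivAt_id x).prodMk (hasDerivAt_const x t)
  have h3 := HasFDerivWithinAt.comp_hasDerivAt x h1 h2
    (by filter_upwards [lt_mem_nhds hx] with y hy using ⟨hy, ht⟩)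
  exact h3

theorem aux_dt {g : ℝ → ℝ → ℝ} {T x t : ℝ}
    (hg : ContDiffOn ℝ (⊤ : ℕ∞) (fun p : ℝ × ℝ => g p.1 p.2) (Ioi 0 ×ˢ Ico 0 T))
    (hx : 0 < x) (ht : t ∈ Ioo 0 T) :
    HasDerivAt (fun u => g x u) (deriv (fun u => g x u) t) t := by
  have h1 := (hg.differentiableOn (by simp) (x, t) ⟨hx, Ioo_subset_Ico_self ht⟩).hasFDerivWithinAt
  have h2 : HasDerivAt (fun u : ℝ => (x, u)) ((0 : ℝ), (1 : ℝ)) t :=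
    (hasDerivAt_const t x).prodMk (hasDerivAt_id t)
  have h3 := HasFDerivWithinAt.comp_hasDerivAt t h1 h2
    (by filter_upwards [Ioo_mem_nhds ht.1 ht.2] with y hy using ⟨hx, Ioo_subset_Ico_self hy⟩)
  have h4 : HasDerivAt (fun u => g x u) _ t := h3
  exact h4.differentiableAt.hasDerivAt

theorem aux_dS_smooth {ξ g : ℝ → ℝ → ℝ} {T : ℝ}
    (hξ : ContDiffOn ℝ (⊤ : ℕ∞) (fun p : ℝ × ℝ => ξ p.1 p.2) (Ioi 0 ×ˢ Ico 0 T))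
    (hpos : ∀ x > 0, ∀ t ∈ Ico (0:ℝ) T, 0 < ξ x t)
    (hg : ContDiffOn ℝ (⊤ : ℕ∞) (fun p : ℝ × ℝ => g p.1 p.2) (Ioi 0 ×ˢ Ico 0 T)) :
    ContDiffOn ℝ (⊤ : ℕ∞) (fun p : ℝ × ℝ => dS ξ g p.1 p.2) (Ioi 0 ×ˢ Ico 0 T) := by
  have hu : UniqueDiffOn ℝ ((Ioi 0 : Set ℝ) ×ˢ Ico 0 T) :=
    isOpen_Ioi.uniqueDiffOn.prod (uniqueDiffOn_Ico 0 T)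
  have h1 : ContDiffOn ℝ (⊤ : ℕ∞)
      (fderivWithin ℝ (fun p : ℝ × ℝ => g p.1 p.2) (Ioi 0 ×ˢ Ico 0 T)) (Ioi 0 ×ˢ Ico 0 T) :=
    hg.fderivWithin hu (by simp)
  have h2 : ContDiffOn ℝ (⊤ : ℕ∞) (fun p : ℝ × ℝ => deriv (fun y => g y p.2) p.1)
      (Ioi 0 ×ˢ Ico 0 T) := by
    refine (h1.clm_apply (contDiffOn_const (c := ((1:ℝ), (0:ℝ))))).congr ?_
    rintro ⟨x, t⟩ ⟨hx, ht⟩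
    exact (aux_dx hg hx ht).deriv
  exact (hξ.inv (fun p hp => (hpos p.1 hp.1 p.2 hp.2).ne')).mul h2

theorem aux_dS {ξ g : ℝ → ℝ → ℝ} {T x t : ℝ}
    (hpos : ∀ x > 0, ∀ t ∈ Ico (0:ℝ) T, 0 < ξ x t)
    (hg : ContDiffOn ℝ (⊤ : ℕ∞) (fun p : ℝ × ℝ => g p.1 p.2) (Ioi 0 ×ˢ Ico 0 T))
    (hx : 0 < x) (ht : t ∈ Ico 0 T) :
    HasDerivAt (fun y => g y t) (ξ x t * dS ξ g x t) x := by
  have h1 := (aux_dx hg hx ht)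
  have h2 := h1.differentiableAt.hasDerivAt
  refine h2.congr_deriv ?_
  rw [dS, mul_inv_cancel_left₀ (hpos x hx t ht).ne']

namespace WarpedBergerFlow

variable (F : WarpedBergerFlow)

theorem hb_s {x t : ℝ} (hx : 0 < x) (ht : t ∈ Ico 0 F.T) :
    HasDerivAt (fun y => F.b y t) (F.ξ x t * F.bS x t) x := aux_dS F.ξ_pos F.smooth_b hx ht
theorem hc_s {x t : ℝ} (hx : 0 < x) (ht : t ∈ Ico 0 F.T) :
    HasDerivAt (fun y => F.c y t) (F.ξ x t * F.cS x t) x := aux_dS F.ξ_pos F.smooth_c hx ht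
theorem smooth_bS :
    ContDiffOn ℝ (⊤ : ℕ∞) (fun p : ℝ × ℝ => F.bS p.1 p.2) (Ioi 0 ×ˢ Ico 0 F.T) :=
  aux_dS_smooth F.smooth_ξ F.ξ_pos F.smooth_b
theorem smooth_cS :
    ContDiffOn ℝ (⊤ : ℕ∞) (fun p : ℝ × ℝ => F.cS p.1 p.2) (Ioi 0 ×ˢ Ico 0 F.T) :=
  aux_dS_smooth F.smooth_ξ F.ξ_pos F.smooth_c
theorem hb_ss {x t : ℝ} (hx : 0 < x) (ht : t ∈ Ico 0 F.T) :
    HasDerivAt (fun y => F.bS y t) (F.ξ x t * F.bSS x t) x := aux_dS F.ξ_pos F.smooth_bS hx ht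
theorem hc_ss {x t : ℝ} (hx : 0 < x) (ht : t ∈ Ico 0 F.T) :
    HasDerivAt (fun y => F.cS y t) (F.ξ x t * F.cSS x t) x := aux_dS F.ξ_pos F.smooth_cS hx ht

theorem bt_eq {x t : ℝ} (hx : 0 < x) (ht : t ∈ Ico 0 F.T) :
    deriv (fun u => F.b x u) t / F.b x t = -(F.k01 x t + F.k12 x t + F.k13 x t) := by
  have hb := (F.b_pos x hx t ht).ne'
  have hc := (F.c_pos x hx t ht).ne'
  rw [F.eq_b x hx t ht]
  simp only [k01, k12, k13, bSS, bS, cS]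
  field_simp
  ring

theorem ct_eq {x t : ℝ} (hx : 0 < x) (ht : t ∈ Ico 0 F.T) :
    deriv (fun u => F.c x u) t / F.c x t = -(F.k03 x t + 2 * F.k13 x t) := by
  have hb := (F.b_pos x hx t ht).ne'
  have hc := (F.c_pos x hx t ht).ne'
  rw [F.eq_c x hx t ht]
  simp only [k03, k13, cSS, bS, cS]
  field_simp
  ring

theorem ξt_eq {x t : ℝ} (hx : 0 < x) (ht : t ∈ Ico 0 F.T) :
    deriv (fun u => F.ξ x u) t / F.ξ x t = 2 * F.k01 x t + F.k03 x t := by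
  have hb := (F.b_pos x hx t ht).ne'
  have hc := (F.c_pos x hx t ht).ne'
  have hξ := (F.ξ_pos x hx t ht).ne'
  rw [F.eq_ξ x hx t ht]
  simp only [k01, k03, cSS, bSS]
  field_simp
  ring

theorem Rm_bounds {x t C : ℝ} (h : F.RmNorm x t ≤ C) :
    |F.k12 x t| ≤ C ∧ |F.k13 x t| ≤ C ∧ |F.k01 x t| ≤ C ∧ |F.k03 x t| ≤ C := by
  unfold RmNorm at h
  have h1 := abs_nonneg (F.k12 x t)
  have h2 := abs_nonneg (F.k13 x t)
  have h3 := abs_nonneg (F.k01 x t)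
  have h4 := abs_nonneg (F.k03 x t)
  refine ⟨?_, ?_, ?_, ?_⟩ <;> linarith

theorem slice_cont {g : ℝ → ℝ → ℝ} {T x t0 : ℝ}
    (hg : ContDiffOn ℝ (⊤ : ℕ∞) (fun p : ℝ × ℝ => g p.1 p.2) (Ioi 0 ×ˢ Ico 0 T))
    (hx : 0 < x) (ht0 : t0 < T) : ContinuousOn (fun t => g x t) (Icc 0 t0) := by
  have h2 : ContinuousOn (fun t : ℝ => (x, t)) (Icc 0 t0) := by fun_prop
  exact hg.continuousOn.comp h2 (fun t ht => ⟨hx, ht.1, lt_of_le_of_lt ht.2 ht0⟩)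

section fixed
variable {t0 C : ℝ} (ht0 : t0 ∈ Ico 0 F.T)
  (hC : ∀ x > 0, ∀ t ∈ Icc (0:ℝ) t0, F.RmNorm x t ≤ C)

theorem log_b_lip (ht0 : t0 ∈ Ico 0 F.T)
    (hC : ∀ x > 0, ∀ t ∈ Icc (0:ℝ) t0, F.RmNorm x t ≤ C) {x : ℝ} (hx : 0 < x) :
    ∀ t ∈ Icc 0 t0, ∀ t' ∈ Icc 0 t0,
      |Real.log (F.b x t') - Real.log (F.b x t)| ≤ (3 * C) * |t' - t| := by
  have hsub : ∀ t ∈ Icc 0 t0, t ∈ Ico 0 F.T := fun t ht => ⟨ht.1, lt_of_le_of_lt ht.2 ht0.2⟩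
  refine aux_log_lip (g' := fun t => deriv (fun u => F.b x u) t)
    (slice_cont F.smooth_b hx ht0.2) (fun t ht => F.b_pos x hx t (hsub t ht))
    (fun t ht => aux_dt F.smooth_b hx ⟨ht.1, ht.2.trans ht0.2⟩) (fun t ht => ?_)
  have ht' := Ioo_subset_Icc_self ht
  rw [F.bt_eq hx (hsub t ht')]
  obtain ⟨h1, h2, h3, h4⟩ := F.Rm_bounds (hC x hx t ht')
  rw [abs_le] at *
  constructor <;> linarith

theorem log_c_lip (ht0 : t0 ∈ Ico 0 F.T)
    (hC : ∀ x > 0, ∀ t ∈ Icc (0:ℝ) t0, F.RmNorm x t ≤ C) {x : ℝ} (hx : 0 < x) :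
    ∀ t ∈ Icc 0 t0, ∀ t' ∈ Icc 0 t0,
      |Real.log (F.c x t') - Real.log (F.c x t)| ≤ (3 * C) * |t' - t| := by
  have hsub : ∀ t ∈ Icc 0 t0, t ∈ Ico 0 F.T := fun t ht => ⟨ht.1, lt_of_le_of_lt ht.2 ht0.2⟩
  refine aux_log_lip (g' := fun t => deriv (fun u => F.c x u) t)
    (slice_cont F.smooth_c hx ht0.2) (fun t ht => F.c_pos x hx t (hsub t ht))
    (fun t ht => aux_dt F.smooth_c hx ⟨ht.1, ht.2.trans ht0.2⟩) (fun t ht => ?_)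
  have ht' := Ioo_subset_Icc_self ht
  rw [F.ct_eq hx (hsub t ht')]
  obtain ⟨h1, h2, h3, h4⟩ := F.Rm_bounds (hC x hx t ht')
  rw [abs_le] at *
  constructor <;> linarith

theorem log_ξ_lip (ht0 : t0 ∈ Ico 0 F.T)
    (hC : ∀ x > 0, ∀ t ∈ Icc (0:ℝ) t0, F.RmNorm x t ≤ C) {x : ℝ} (hx : 0 < x) :
    ∀ t ∈ Icc 0 t0, ∀ t' ∈ Icc 0 t0,
      |Real.log (F.ξ x t') - Real.log (F.ξ x t)| ≤ (3 * C) * |t' - t| := by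
  have hsub : ∀ t ∈ Icc 0 t0, t ∈ Ico 0 F.T := fun t ht => ⟨ht.1, lt_of_le_of_lt ht.2 ht0.2⟩
  refine aux_log_lip (g' := fun t => deriv (fun u => F.ξ x u) t)
    (slice_cont F.smooth_ξ hx ht0.2) (fun t ht => F.ξ_pos x hx t (hsub t ht))
    (fun t ht => aux_dt F.smooth_ξ hx ⟨ht.1, ht.2.trans ht0.2⟩) (fun t ht => ?_)
  have ht' := Ioo_subset_Icc_self ht
  rw [F.ξt_eq hx (hsub t ht')]
  obtain ⟨h1, h2, h3, h4⟩ := F.Rm_bounds (hC x hx t ht')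
  rw [abs_le] at *
  constructor <;> linarith

theorem C_nonneg (ht0 : t0 ∈ Ico 0 F.T)
    (hC : ∀ x > 0, ∀ t ∈ Icc (0:ℝ) t0, F.RmNorm x t ≤ C) : 0 ≤ C := by
  have := (F.Rm_bounds (hC 1 one_pos 0 ⟨le_refl _, ht0.1⟩)).1
  exact (abs_nonneg _).trans this

/-- Riccati comparison: the mean curvature is bounded above away from the origin. -/
theorem H_bound (ht0 : t0 ∈ Ico 0 F.T)
    (hC : ∀ x > 0, ∀ t ∈ Icc (0:ℝ) t0, F.RmNorm x t ≤ C) :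
    ∃ K, 0 ≤ K ∧ ∀ x ≥ 1, ∀ t ∈ Icc 0 t0, F.meanH x t ≤ K := by
  have hsub : ∀ t ∈ Icc 0 t0, t ∈ Ico 0 F.T := fun t ht => ⟨ht.1, lt_of_le_of_lt ht.2 ht0.2⟩
  have hC0 := F.C_nonneg ht0 hC
  have hcont : ContinuousOn (fun t => F.meanH 1 t) (Icc 0 t0) := by
    have h1 := slice_cont F.smooth_b one_pos ht0.2
    have h2 := slice_cont F.smooth_c one_pos ht0.2
    have h3 := slice_cont F.smooth_bS one_pos ht0.2
    have h4 := slice_cont F.smooth_cS one_pos ht0.2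
    exact ((continuousOn_const.mul h3).div h1
      (fun t ht => (F.b_pos 1 one_pos t (hsub t ht)).ne')).add
      (h4.div h2 (fun t ht => (F.c_pos 1 one_pos t (hsub t ht)).ne'))
  obtain ⟨K0, hK0⟩ := isCompact_Icc.bddAbove_image hcont
  set K := max K0 (9 * C + 3) with hK
  have hKge : 9 * C + 3 ≤ K := le_max_right _ _
  refine ⟨K, by linarith, ?_⟩
  intro x hx t ht
  have hxpos : ∀ y ∈ Icc 1 x, (0:ℝ) < y := fun y hy => lt_of_lt_of_le one_pos hy.1
  have hd : ∀ y, 0 < y → HasDerivAt (fun z => F.meanH z t)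
      (F.ξ y t * (2 * (F.bSS y t / F.b y t - (F.bS y t / F.b y t) ^ 2)
        + (F.cSS y t / F.c y t - (F.cS y t / F.c y t) ^ 2))) y := by
    intro y hy
    have hb := (F.b_pos y hy t (hsub t ht)).ne'
    have hc := (F.c_pos y hy t (hsub t ht)).ne'
    have h1 := ((F.hb_ss hy (hsub t ht)).const_mul 2).div (F.hb_s hy (hsub t ht)) hb
    have h2 := (F.hc_ss hy (hsub t ht)).div (F.hc_s hy (hsub t ht)) hc
    refine (h1.add h2).congr_deriv ?_
    field_simp
  refine image_le_of_deriv_right_lt_deriv_boundary (f := fun z => F.meanH z t) (a := 1) (b := x)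
    (f' := fun y => F.ξ y t * (2 * (F.bSS y t / F.b y t - (F.bS y t / F.b y t) ^ 2)
        + (F.cSS y t / F.c y t - (F.cS y t / F.c y t) ^ 2)))
    (B := fun _ => K) (B' := fun _ => 0) ?_ ?_ ?_ ?_ ?_ ⟨hx, le_refl _⟩
  · exact fun y hy => (hd y (hxpos y hy)).continuousAt.continuousWithinAt
  · exact fun y hy => (hd y (hxpos y (Ico_subset_Icc_self hy))).hasDerivWithinAt
  · exact (hK0 ⟨t, ht, rfl⟩).trans (le_max_left _ _)
  · exact fun y => hasDerivAt_const _ _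
  · intro y hy he
    have hy0 := hxpos y (Ico_subset_Icc_self hy)
    obtain ⟨h1, h2, h3, h4⟩ := F.Rm_bounds (hC y hy0 t ht)
    rw [abs_le] at h3 h4
    have e1 : F.bSS y t / F.b y t = -F.k01 y t := by simp only [k01]; ring
    have e2 : F.cSS y t / F.c y t = -F.k03 y t := by simp only [k03]; ring
    refine mul_neg_of_pos_of_neg (F.ξ_pos y hy0 t (hsub t ht)) ?_
    rw [e1, e2]
    simp only [meanH] at he
    rw [mul_div_assoc] at he
    set p := F.bS y t / F.b y t
    set q := F.cS y t / F.c y t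
    have hcs : K ^ 2 ≤ 3 * (2 * p ^ 2 + q ^ 2) := by
      rw [← he]; nlinarith [sq_nonneg (p - q)]
    have hK2 : 9 * C + 3 ≤ K ^ 2 := by nlinarith
    nlinarith

theorem comp_one (ht0 : t0 ∈ Ico 0 F.T) :
    Tendsto (fun x => ∫ y in (1:ℝ)..x, F.ξ y 0) atTop atTop := by
  have h0 : (0:ℝ) ∈ Ico 0 F.T := ⟨le_refl _, lt_of_le_of_lt ht0.1 ht0.2⟩
  have h := F.complete 0 h0
  have h1 : ∀ᶠ x in atTop, (∫ y in (0:ℝ)..x, F.ξ y 0) + (-(∫ y in (0:ℝ)..1, F.ξ y 0))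
      = ∫ y in (1:ℝ)..x, F.ξ y 0 := by
    filter_upwards [h.eventually (eventually_gt_atTop 0), eventually_ge_atTop 1] with x hx hx1
    have hi : IntervalIntegrable (fun y => F.ξ y 0) volume 0 x := by
      by_contra hn
      rw [intervalIntegral.integral_undef hn] at hx
      exact lt_irrefl _ hx
    have h01 : IntervalIntegrable (fun y => F.ξ y 0) volume 0 1 :=
      hi.mono_set (by rw [uIcc_of_le zero_le_one, uIcc_of_le (by linarith)]
                      exact Icc_subset_Icc le_rfl hx1)
    have h1x : IntervalIntegrable (fun y => F.ξ y 0) volume 1 x :=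
      hi.mono_set (by rw [uIcc_of_le hx1, uIcc_of_le (by linarith)]
                      exact Icc_subset_Icc zero_le_one le_rfl)
    rw [← intervalIntegral.integral_add_adjacent_intervals h01 h1x]
    ring
  exact (tendsto_atTop_add_const_right _ _ h).congr' h1

theorem ratio_origin {t : ℝ} (ht : t ∈ Ico 0 F.T) :
    Tendsto (fun x => F.c x t / F.b x t) (𝓝[>] 0) (𝓝 1) := by
  have hpos : ∀ᶠ x : ℝ in 𝓝[>] 0, 0 < x := self_mem_nhdsWithin
  have hbs : Tendsto (fun x => F.bS x t) (𝓝[>] 0) (𝓝 1) := F.bs_origin t ht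
  have hcs : Tendsto (fun x => F.cS x t) (𝓝[>] 0) (𝓝 1) := F.cs_origin t ht
  refine HasDerivAt.lhopital_zero_nhdsGT (f' := fun x => F.ξ x t * F.cS x t)
    (g' := fun x => F.ξ x t * F.bS x t)
    (hpos.mono fun x hx => F.hc_s hx ht) (hpos.mono fun x hx => F.hb_s hx ht) ?_
    (F.c_origin t ht) (F.b_origin t ht) ?_
  · filter_upwards [hpos, hbs.eventually (lt_mem_nhds (zero_lt_one))] with x hx hx2
    exact (mul_pos (F.ξ_pos x hx t ht) hx2).ne'
  · have h1 := hcs.div hbs one_ne_zero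
    rw [div_one] at h1
    refine h1.congr' ?_
    filter_upwards [hpos] with x hx
    have := (F.ξ_pos x hx t ht).ne'
    simp only [Pi.div_apply]
    rw [mul_div_mul_left _ _ this]

theorem ξ_growth (ht0 : t0 ∈ Ico 0 F.T)
    (hC : ∀ x > 0, ∀ t ∈ Icc (0:ℝ) t0, F.RmNorm x t ≤ C) :
    ∀ x > 0, ∀ t ∈ Icc 0 t0, ∀ t' ∈ Icc 0 t0, t ≤ t' →
      F.ξ x t ≤ Real.exp ((3 * C) * (t' - t)) * F.ξ x t' := by
  intro x hx t ht t' ht' htt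
  have hsub : ∀ t ∈ Icc 0 t0, t ∈ Ico 0 F.T := fun t ht => ⟨ht.1, lt_of_le_of_lt ht.2 ht0.2⟩
  have h := F.log_ξ_lip ht0 hC hx t ht t' ht'
  have p1 := F.ξ_pos x hx t (hsub t ht)
  have p2 := F.ξ_pos x hx t' (hsub t' ht')
  rw [abs_of_nonneg (sub_nonneg.2 htt)] at h
  have h' := (abs_le.1 h).1
  rw [← Real.log_le_log_iff p1 (by positivity), Real.log_mul (Real.exp_pos _).ne' p2.ne',
    Real.log_exp]
  linarith

/-- The ordering `c ≤ b` is preserved. -/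
theorem ordered (ht0 : t0 ∈ Ico 0 F.T)
    (hC : ∀ x > 0, ∀ t ∈ Icc (0:ℝ) t0, F.RmNorm x t ≤ C) :
    ∀ x > 0, ∀ t ∈ Icc 0 t0, F.c x t ≤ F.b x t := by
  have hsub : ∀ t ∈ Icc 0 t0, t ∈ Ico 0 F.T := fun t ht => ⟨ht.1, lt_of_le_of_lt ht.2 ht0.2⟩
  have hC0 := F.C_nonneg ht0 hC
  have h0m : (0:ℝ) ∈ Icc 0 t0 := ⟨le_refl _, ht0.1⟩
  obtain ⟨K, hK, hH⟩ := F.H_bound ht0 hC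
  have hlip : ∀ x > 0, ∀ t ∈ Icc 0 t0, ∀ t' ∈ Icc 0 t0,
      Real.log (F.c x t') - Real.log (F.b x t') ≤
        Real.log (F.c x t) - Real.log (F.b x t) + 6 * C * |t' - t| := by
    intro x hx t ht t' ht'
    have h1 := (abs_le.1 (F.log_c_lip ht0 hC hx t ht t' ht')).2
    have h2 := (abs_le.1 (F.log_b_lip ht0 hC hx t ht t' ht')).1
    linarith
  have hsubU : ((Ioi 0 : Set ℝ) ×ˢ Icc 0 t0) ⊆ (Ioi 0 ×ˢ Ico 0 F.T) :=
    prod_mono (le_refl _) hsub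
  have hinit : ∀ x > 0, Real.log (F.c x 0) - Real.log (F.b x 0) ≤ 0 := by
    intro x hx
    have := Real.log_le_log (F.c_pos x hx 0 (hsub 0 h0m)) (F.ordered_init x hx)
    linarith
  have main := aux_mp ht0.1 (ξ := F.ξ) (f := fun x t => Real.log (F.c x t) - Real.log (F.b x t))
    (fs := fun x t => F.cS x t / F.c x t - F.bS x t / F.b x t)
    (fss := fun x t => (F.cSS x t / F.c x t - (F.cS x t / F.c x t) ^ 2)
      - (F.bSS x t / F.b x t - (F.bS x t / F.b x t) ^ 2))
    (ft := fun x t => deriv (fun u => F.c x u) t / F.c x t - deriv (fun u => F.b x u) t / F.b x t)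
    (H := F.meanH) (C := 3 * C) (K := K) (B := 6 * C * t0) (by positivity) hK
    (fun x hx t ht => F.ξ_pos x hx t (hsub t ht))
    (F.smooth_ξ.continuousOn.mono hsubU) (F.ξ_growth ht0 hC) (F.comp_one ht0) hH
    (((F.smooth_c.continuousOn.mono hsubU).log
        (fun p hp => (F.c_pos p.1 hp.1 p.2 (hsub _ hp.2)).ne')).sub
      ((F.smooth_b.continuousOn.mono hsubU).log
        (fun p hp => (F.b_pos p.1 hp.1 p.2 (hsub _ hp.2)).ne')))
    ?_ ?_ ?_ ?_ ?_ hinit ?_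
  · intro x hx t ht
    have h1 := main x hx t ht
    exact (Real.log_le_log_iff (F.c_pos x hx t (hsub t ht)) (F.b_pos x hx t (hsub t ht))).1
      (by linarith)
  · intro x hx t ht
    have htT := hsub t (Ioc_subset_Icc_self ht)
    exact (((F.hc_s hx htT).log (F.c_pos x hx t htT).ne').sub
      ((F.hb_s hx htT).log (F.b_pos x hx t htT).ne')).congr_deriv (by ring)
  · intro x hx t ht
    have htT := hsub t (Ioc_subset_Icc_self ht)
    have hb := (F.b_pos x hx t htT).ne'
    have hc := (F.c_pos x hx t htT).ne'
    refine (((F.hc_ss hx htT).div (F.hc_s hx htT) hc).sub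
      ((F.hb_ss hx htT).div (F.hb_s hx htT) hb)).congr_deriv ?_
    field_simp
  · intro x hx t ht
    have htT := hsub t (Ioc_subset_Icc_self ht)
    have htO : t ∈ Ioo 0 F.T := ⟨ht.1, htT.2⟩
    exact ((aux_dt F.smooth_c hx htO).log (F.c_pos x hx t htT).ne').sub
      ((aux_dt F.smooth_b hx htO).log (F.b_pos x hx t htT).ne')
  · intro x hx t ht hpos
    have htT := hsub t (Ioc_subset_Icc_self ht)
    have hb := (F.b_pos x hx t htT)
    have hc := (F.c_pos x hx t htT)
    have hlt : F.b x t < F.c x t := (Real.log_lt_log_iff hb hc).1 (by linarith)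
    have e : (deriv (fun u => F.c x u) t / F.c x t - deriv (fun u => F.b x u) t / F.b x t) =
        ((F.cSS x t / F.c x t - (F.cS x t / F.c x t) ^ 2)
        - (F.bSS x t / F.b x t - (F.bS x t / F.b x t) ^ 2))
        + F.meanH x t * (F.cS x t / F.c x t - F.bS x t / F.b x t)
        - 4 * (F.c x t ^ 2 - F.b x t ^ 2) / F.b x t ^ 4 := by
      rw [F.bt_eq hx htT, F.ct_eq hx htT]
      simp only [k01, k12, k13, k03, meanH]
      field_simp
      ring
    have h2 : 0 ≤ 4 * (F.c x t ^ 2 - F.b x t ^ 2) / F.b x t ^ 4 := by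
      have : F.b x t ^ 2 ≤ F.c x t ^ 2 := pow_le_pow_left₀ hb.le hlt.le 2
      exact div_nonneg (by linarith) (by positivity)
    linarith
  · intro x hx t ht
    have h1 := hlip x hx 0 h0m t ht
    have h2 := hinit x hx
    rw [sub_zero, abs_of_nonneg ht.1] at h1
    have : 6 * C * t ≤ 6 * C * t0 := mul_le_mul_of_nonneg_left ht.2 (by positivity)
    linarith
  · intro ε hε
    have hev : ∀ᶠ x in 𝓝 (0:ℝ), ∀ t ∈ Icc 0 t0,
        (0 < x → t ∈ Icc 0 t0 → Real.log (F.c x t) - Real.log (F.b x t) ≤ ε) := by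
      refine isCompact_Icc.eventually_forall_of_forall_eventually ?_
      intro t ht
      have h1 : Tendsto (fun x => Real.log (F.c x t / F.b x t)) (𝓝[>] 0) (𝓝 0) := by
        have := (F.ratio_origin (hsub t ht)).log one_ne_zero
        rwa [Real.log_one] at this
      have h2 : ∀ᶠ x in 𝓝 (0:ℝ), x ∈ Ioi (0:ℝ) → Real.log (F.c x t / F.b x t) < ε / 2 :=
        eventually_nhdsWithin_iff.1 (h1.eventually (gt_mem_nhds (half_pos hε)))
      have h3 : ∀ᶠ t' in 𝓝 t, 6 * C * |t' - t| < ε / 2 := by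
        have hc : Continuous fun t' : ℝ => 6 * C * |t' - t| := by fun_prop
        have := hc.tendsto t
        simp only [sub_self, abs_zero, mul_zero] at this
        exact this.eventually (gt_mem_nhds (half_pos hε))
      rw [nhds_prod_eq]
      filter_upwards [h2.prod_mk h3] with z hz hz1 hz2
      have a1 := hz.1 hz1
      rw [Real.log_div (F.c_pos _ hz1 t (hsub t ht)).ne' (F.b_pos _ hz1 t (hsub t ht)).ne'] at a1
      have a2 := hlip z.1 hz1 t ht z.2 hz2
      linarith [hz.2]
    obtain ⟨δ, hδ, hb⟩ := Metric.eventually_nhds_iff.1 hev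
    refine ⟨δ, hδ, fun x hx hxd t ht => hb ?_ t ht hx ht⟩
    rw [Real.dist_eq, sub_zero, abs_of_pos hx]
    exact hxd

theorem b_growth (ht0 : t0 ∈ Ico 0 F.T)
    (hC : ∀ x > 0, ∀ t ∈ Icc (0:ℝ) t0, F.RmNorm x t ≤ C) :
    ∀ x > 0, ∀ t ∈ Icc 0 t0, F.b x t ≤ Real.exp (3 * C * t0) * F.b x 0 := by
  intro x hx t ht
  have hsub : ∀ t ∈ Icc 0 t0, t ∈ Ico 0 F.T := fun t ht => ⟨ht.1, lt_of_le_of_lt ht.2 ht0.2⟩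
  have h0m : (0:ℝ) ∈ Icc 0 t0 := ⟨le_refl _, ht0.1⟩
  have hC0 := F.C_nonneg ht0 hC
  have h := F.log_b_lip ht0 hC hx 0 h0m t ht
  have p1 := F.b_pos x hx t (hsub t ht)
  have p2 := F.b_pos x hx 0 (hsub 0 h0m)
  rw [sub_zero, abs_of_nonneg ht.1] at h
  have h' := (abs_le.1 h).2
  rw [← Real.log_le_log_iff p1 (by positivity), Real.log_mul (Real.exp_pos _).ne' p2.ne',
    Real.log_exp]
  have : 3 * C * t ≤ 3 * C * t0 := mul_le_mul_of_nonneg_left ht.2 (by positivity)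
  linarith

/-- Main estimate: `b² ≤ M - 4t` as long as the right-hand side is nonnegative. -/
theorem b_sq_le (ht0 : t0 ∈ Ico 0 F.T)
    (hC : ∀ x > 0, ∀ t ∈ Icc (0:ℝ) t0, F.RmNorm x t ≤ C) {M : ℝ}
    (hM : ∀ x > 0, F.b x 0 ^ 2 ≤ M) (htM : 4 * t0 ≤ M) :
    ∀ x > 0, ∀ t ∈ Icc 0 t0, F.b x t ^ 2 ≤ M - 4 * t := by
  have hsub : ∀ t ∈ Icc 0 t0, t ∈ Ico 0 F.T := fun t ht => ⟨ht.1, lt_of_le_of_lt ht.2 ht0.2⟩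
  have hC0 := F.C_nonneg ht0 hC
  have h0m : (0:ℝ) ∈ Icc 0 t0 := ⟨le_refl _, ht0.1⟩
  obtain ⟨K, hK, hH⟩ := F.H_bound ht0 hC
  have hord := F.ordered ht0 hC
  have hsubU : ((Ioi 0 : Set ℝ) ×ˢ Icc 0 t0) ⊆ (Ioi 0 ×ˢ Ico 0 F.T) :=
    prod_mono (le_refl _) hsub
  have hgr : ∀ x > 0, ∀ t ∈ Icc 0 t0, F.b x t ^ 2 ≤ Real.exp (3 * C * t0) ^ 2 * F.b x 0 ^ 2 := by
    intro x hx t ht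
    rw [← mul_pow]
    exact pow_le_pow_left₀ (F.b_pos x hx t (hsub t ht)).le (F.b_growth ht0 hC x hx t ht) 2
  have hcont4 : ContinuousOn (fun p : ℝ × ℝ => M - 4 * p.2) (Ioi 0 ×ˢ Icc 0 t0) := by fun_prop
  have main := aux_mp ht0.1 (ξ := F.ξ) (f := fun x t => F.b x t ^ 2 - (M - 4 * t))
    (fs := fun x t => 2 * (F.b x t * F.bS x t))
    (fss := fun x t => 2 * (F.bS x t * F.bS x t + F.b x t * F.bSS x t))
    (ft := fun x t => 2 * F.b x t * deriv (fun u => F.b x u) t + 4)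
    (H := F.meanH) (C := 3 * C) (K := K) (B := Real.exp (3 * C * t0) ^ 2 * M)
    (by positivity) hK
    (fun x hx t ht => F.ξ_pos x hx t (hsub t ht))
    (F.smooth_ξ.continuousOn.mono hsubU) (F.ξ_growth ht0 hC) (F.comp_one ht0) hH
    (((F.smooth_b.continuousOn.mono hsubU).pow 2).sub hcont4)
    ?_ ?_ ?_ ?_ ?_ ?_ ?_
  · intro x hx t ht
    have := main x hx t ht
    linarith
  · intro x hx t ht
    have htT := hsub t (Ioc_subset_Icc_self ht)
    refine (((F.hb_s hx htT).pow 2).sub_const (M - 4 * t)).congr_deriv ?_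
    push_cast
    ring
  · intro x hx t ht
    have htT := hsub t (Ioc_subset_Icc_self ht)
    refine (((F.hb_s hx htT).mul (F.hb_ss hx htT)).const_mul 2).congr_deriv ?_
    ring
  · intro x hx t ht
    have htT := hsub t (Ioc_subset_Icc_self ht)
    have htO : t ∈ Ioo 0 F.T := ⟨ht.1, htT.2⟩
    have h1 : HasDerivAt (fun u : ℝ => M - 4 * u) (-(4 * 1)) t :=
      ((hasDerivAt_id t).const_mul 4).const_sub M
    refine (((aux_dt F.smooth_b hx htO).pow 2).sub h1).congr_deriv ?_
    push_cast
    ring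
  · intro x hx t ht hpos
    have htT := hsub t (Ioc_subset_Icc_self ht)
    have hb := (F.b_pos x hx t htT)
    have hc := (F.c_pos x hx t htT)
    have hcb := hord x hx t (Ioc_subset_Icc_self ht)
    have e : 2 * F.b x t * deriv (fun u => F.b x u) t + 4 =
        2 * (F.bS x t * F.bS x t + F.b x t * F.bSS x t)
        + F.meanH x t * (2 * (F.b x t * F.bS x t))
        - 4 * F.bS x t ^ 2 - 4 * (F.b x t ^ 2 - F.c x t ^ 2) / F.b x t ^ 2 := by
      rw [F.eq_b x hx t htT]
      simp only [meanH, bSS, bS, cS]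
      field_simp
      ring
    have h2 : 0 ≤ 4 * (F.b x t ^ 2 - F.c x t ^ 2) / F.b x t ^ 2 := by
      have : F.c x t ^ 2 ≤ F.b x t ^ 2 := pow_le_pow_left₀ hc.le hcb 2
      exact div_nonneg (by linarith) (by positivity)
    have h3 := sq_nonneg (F.bS x t)
    linarith
  · intro x hx t ht
    have h1 := hgr x hx t ht
    have h2 : Real.exp (3 * C * t0) ^ 2 * F.b x 0 ^ 2 ≤ Real.exp (3 * C * t0) ^ 2 * M :=
      mul_le_mul_of_nonneg_left (hM x hx) (by positivity)
    linarith [ht.2]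
  · intro x hx
    have := hM x hx
    linarith
  · intro ε hε
    have h1 : Tendsto (fun x => Real.exp (3 * C * t0) ^ 2 * F.b x 0 ^ 2) (𝓝[>] 0) (𝓝 0) := by
      have := ((F.b_origin 0 (hsub 0 h0m)).pow 2).const_mul (Real.exp (3 * C * t0) ^ 2)
      simpa using this
    have h2 : ∀ᶠ x in 𝓝[>] (0:ℝ), Real.exp (3 * C * t0) ^ 2 * F.b x 0 ^ 2 < ε :=
      h1.eventually (gt_mem_nhds hε)
    obtain ⟨δ, hδ, hI⟩ := (mem_nhdsGT_iff_exists_Ioo_subset).1 h2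
    refine ⟨δ, hδ, fun x hx hxd t ht => ?_⟩
    have a1 : Real.exp (3 * C * t0) ^ 2 * F.b x 0 ^ 2 < ε := hI ⟨hx, hxd⟩
    have a2 := hgr x hx t ht
    linarith [ht.2]

end fixed

end WarpedBergerFlow

/-- for `g₀ ∈ 𝒢`, `sup_x b(x,t) ≤ sup_x b(x,0)` for every `t ∈ [0,T)`,
and `T ≤ (sup_x b²(x,0))/4`. -/
theorem warpedBerger_finite_time (F : WarpedBergerFlow) (hBC : F.BoundedCurvature)
    (hG : F.InG) :
    (∀ t ∈ Set.Ico (0:ℝ) F.T, ∀ x > 0,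
        F.b x t ≤ sSup {r : ℝ | ∃ y > 0, r = F.b y 0}) ∧
    F.T ≤ sSup {r : ℝ | ∃ y > 0, r = (F.b y 0) ^ 2} / 4 := by
  obtain ⟨-, -, ⟨M0, hM0⟩, -⟩ := hG
  have h0T : (0:ℝ) ∈ Ico 0 F.T := ⟨le_refl _, F.T_pos⟩
  set S1 := sSup {r : ℝ | ∃ y > 0, r = F.b y 0} with hS1
  set S2 := sSup {r : ℝ | ∃ y > 0, r = (F.b y 0) ^ 2} with hS2
  have hb1 : ∀ y > 0, F.b y 0 ≤ S1 := fun y hy =>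
    le_csSup ⟨M0, by rintro r ⟨z, hz, rfl⟩; exact hM0 z hz⟩ ⟨y, hy, rfl⟩
  have hbd2 : BddAbove {r : ℝ | ∃ y > 0, r = (F.b y 0) ^ 2} := by
    refine ⟨S1 ^ 2, ?_⟩
    rintro r ⟨z, hz, rfl⟩
    exact pow_le_pow_left₀ (F.b_pos z hz 0 h0T).le (hb1 z hz) 2
  have hb2 : ∀ y > 0, F.b y 0 ^ 2 ≤ S2 := fun y hy => le_csSup hbd2 ⟨y, hy, rfl⟩
  have hS12 : S2 ≤ S1 ^ 2 := by
    refine csSup_le ⟨_, 1, one_pos, rfl⟩ ?_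
    rintro r ⟨z, hz, rfl⟩
    exact pow_le_pow_left₀ (F.b_pos z hz 0 h0T).le (hb1 z hz) 2
  have hS1pos : 0 < S1 := lt_of_lt_of_le (F.b_pos 1 one_pos 0 h0T) (hb1 1 one_pos)
  have hS2pos : 0 ≤ S2 := (sq_nonneg _).trans (hb2 1 one_pos)
  have hT : F.T ≤ S2 / 4 := by
    by_contra hlt
    push Not at hlt
    have ht0 : S2 / 4 ∈ Ico 0 F.T := ⟨by positivity, hlt⟩
    obtain ⟨C, hC⟩ := hBC _ ht0
    have h1 := F.b_sq_le ht0 hC hb2 (by linarith) 1 one_pos (S2 / 4) ⟨ht0.1, le_refl _⟩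
    have h2 := F.b_pos 1 one_pos _ ht0
    have h3 : 0 < F.b 1 (S2 / 4) ^ 2 := by positivity
    linarith
  refine ⟨?_, hT⟩
  intro t ht x hx
  obtain ⟨C, hC⟩ := hBC t ht
  have h1 := F.b_sq_le ht hC hb2 (by linarith [ht.2]) x hx t ⟨ht.1, le_refl _⟩
  exact le_of_sq_le_sq (by linarith [ht.1]) hS1pos.le
end
end

section
/- Let (ℝ⁴, g(t)) for t ∈ [0,T), T < ∞, be a warped Berger Ricci flow with bounded curvature starting at a complete bounded-curvature warped Berger metric g₀ with b_s ≥ 0 and H ≥ 0 at t = 0 and with b(x,0) → ∞ and b²c(x,0) → ∞ as x → ∞, and suppose there exists ρ > 0 such that |Rm|(x,t) ≤ 1 and, for each t₀ < T, the first derivatives of the curvature are uniformly bounded, for all x ≥ ρ and all t ∈ [0,T). Then there exist x̃₂ ≥ x̃₁ > ρ, δ > 0 and t̃ ∈ [0,T) such that b_s(x̃₁,t) ≥ δ and H(x̃₂,t) ≥ δ for every t ∈ [t̃,T). -/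
open Set Filter Topology MeasureTheory

noncomputable section

/-- The open part of space-time. -/
def opU (T : ℝ) : Set (ℝ × ℝ) := Ioi (0:ℝ) ×ˢ Ioo (0:ℝ) T

theorem isOpen_opU (T : ℝ) : IsOpen (opU T) := isOpen_Ioi.prod isOpen_Ioo

theorem slice_x {f : ℝ → ℝ → ℝ} {x t : ℝ}
    (hf : DifferentiableAt ℝ (fun p : ℝ × ℝ => f p.1 p.2) (x, t)) :
    HasDerivAt (fun y => f y t) (fderiv ℝ (fun p : ℝ × ℝ => f p.1 p.2) (x, t) (1, 0)) x := by
  have h := hf.hasFDerivAt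
  have h2 : HasDerivAt (fun y : ℝ => (y, t)) ((1:ℝ), (0:ℝ)) x :=
    (hasDerivAt_id x).prodMk (hasDerivAt_const x t)
  exact HasFDerivAt.comp_hasDerivAt (f := fun y : ℝ => (y, t)) x h h2

theorem slice_t {f : ℝ → ℝ → ℝ} {x t : ℝ}
    (hf : DifferentiableAt ℝ (fun p : ℝ × ℝ => f p.1 p.2) (x, t)) :
    HasDerivAt (fun u => f x u) (fderiv ℝ (fun p : ℝ × ℝ => f p.1 p.2) (x, t) (0, 1)) t := by
  have h := hf.hasFDerivAt
  have h2 : HasDerivAt (fun u : ℝ => (x, u)) ((0:ℝ), (1:ℝ)) t :=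
    (hasDerivAt_const t x).prodMk (hasDerivAt_id t)
  exact HasFDerivAt.comp_hasDerivAt (f := fun u : ℝ => (x, u)) t h h2

theorem diffAt_of {f : ℝ → ℝ → ℝ} {T : ℝ}
    (hf : ContDiffOn ℝ (⊤ : ℕ∞) (fun p : ℝ × ℝ => f p.1 p.2) (opU T)) {p : ℝ × ℝ}
    (hp : p ∈ opU T) : DifferentiableAt ℝ (fun p : ℝ × ℝ => f p.1 p.2) p :=
  (hf.contDiffAt ((isOpen_opU T).mem_nhds hp)).differentiableAt (by simp)

theorem contDiffOn_dx {f : ℝ → ℝ → ℝ} {T : ℝ}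
    (hf : ContDiffOn ℝ (⊤ : ℕ∞) (fun p : ℝ × ℝ => f p.1 p.2) (opU T)) :
    ContDiffOn ℝ (⊤ : ℕ∞) (fun p : ℝ × ℝ => deriv (fun y => f y p.2) p.1) (opU T) := by
  have h1 : ContDiffOn ℝ (⊤ : ℕ∞) (fderiv ℝ (fun p : ℝ × ℝ => f p.1 p.2)) (opU T) :=
    hf.fderiv_of_isOpen (isOpen_opU T) (by simp)
  have h2 : ContDiffOn ℝ (⊤ : ℕ∞)
      (fun p => fderiv ℝ (fun p : ℝ × ℝ => f p.1 p.2) p ((1:ℝ), (0:ℝ))) (opU T) :=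
    h1.clm_apply contDiffOn_const
  refine h2.congr ?_
  rintro ⟨x, t⟩ hp
  exact (slice_x (diffAt_of hf hp)).deriv

theorem contDiffOn_dS {ξ f : ℝ → ℝ → ℝ} {T : ℝ}
    (hξ : ContDiffOn ℝ (⊤ : ℕ∞) (fun p : ℝ × ℝ => ξ p.1 p.2) (opU T))
    (h0 : ∀ p ∈ opU T, ξ p.1 p.2 ≠ 0)
    (hf : ContDiffOn ℝ (⊤ : ℕ∞) (fun p : ℝ × ℝ => f p.1 p.2) (opU T)) :
    ContDiffOn ℝ (⊤ : ℕ∞) (fun p : ℝ × ℝ => dS ξ f p.1 p.2) (opU T) := by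
  unfold dS
  exact (hξ.inv h0).mul (contDiffOn_dx hf)

/-- Mixed derivatives. -/
theorem mixed {f G : ℝ → ℝ → ℝ} {T : ℝ}
    (hf : ContDiffOn ℝ (⊤ : ℕ∞) (fun p : ℝ × ℝ => f p.1 p.2) (opU T))
    (hG : ∀ x > 0, ∀ t ∈ Ioo (0:ℝ) T, HasDerivAt (fun u => f x u) (G x t) t)
    {x t : ℝ} (hx : 0 < x) (ht : t ∈ Ioo (0:ℝ) T) :
    HasDerivAt (fun u => deriv (fun y => f y u) x) (deriv (fun y => G y t) x) t := by
  set Φ : ℝ × ℝ → ℝ := fun p => f p.1 p.2 with hΦ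
  have hp : (x, t) ∈ opU T := ⟨hx, ht⟩
  have hnh := (isOpen_opU T).mem_nhds hp
  have h1 : ContDiffOn ℝ (⊤ : ℕ∞) (fderiv ℝ Φ) (opU T) :=
    hf.fderiv_of_isOpen (isOpen_opU T) (by simp)
  have hd : DifferentiableAt ℝ (fderiv ℝ Φ) (x, t) :=
    (h1.contDiffAt hnh).differentiableAt (by simp)
  have hsym : IsSymmSndFDerivAt ℝ Φ (x, t) :=
    (hf.contDiffAt hnh).isSymmSndFDerivAt
      (by simpa using WithTop.coe_le_coe.2 (le_top : (2 : ℕ∞) ≤ ⊤))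
  have hA : HasDerivAt (fun u : ℝ => fderiv ℝ Φ (x, u)) (fderiv ℝ (fderiv ℝ Φ) (x, t) (0, 1)) t :=
    HasFDerivAt.comp_hasDerivAt (f := fun u : ℝ => (x, u)) t hd.hasFDerivAt
      ((hasDerivAt_const t x).prodMk (hasDerivAt_id t))
  have hB : HasDerivAt (fun y : ℝ => fderiv ℝ Φ (y, t)) (fderiv ℝ (fderiv ℝ Φ) (x, t) (1, 0)) x :=
    HasFDerivAt.comp_hasDerivAt (f := fun y : ℝ => (y, t)) x hd.hasFDerivAt
      ((hasDerivAt_id x).prodMk (hasDerivAt_const x t))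
  have hA' : HasDerivAt (fun u : ℝ => fderiv ℝ Φ (x, u) (1, 0))
      (fderiv ℝ (fderiv ℝ Φ) (x, t) (0, 1) (1, 0)) t := by
    simpa using hA.clm_apply (hasDerivAt_const t ((1:ℝ), (0:ℝ)))
  have hB' : HasDerivAt (fun y : ℝ => fderiv ℝ Φ (y, t) (0, 1))
      (fderiv ℝ (fderiv ℝ Φ) (x, t) (1, 0) (0, 1)) x := by
    simpa using hB.clm_apply (hasDerivAt_const x ((0:ℝ), (1:ℝ)))
  have hGe : (fun y => G y t) =ᶠ[𝓝 x] fun y => fderiv ℝ Φ (y, t) (0, 1) := by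
    filter_upwards [isOpen_Ioi.mem_nhds hx] with y hy
    exact (hG y hy t ht).unique (slice_t (diffAt_of hf ⟨hy, ht⟩))
  have hFe : (fun u => deriv (fun y => f y u) x) =ᶠ[𝓝 t] fun u => fderiv ℝ Φ (x, u) (1, 0) := by
    filter_upwards [isOpen_Ioo.mem_nhds ht] with u hu
    exact (slice_x (diffAt_of hf ⟨hx, hu⟩)).deriv
  rw [hGe.deriv_eq, hB'.deriv, hsym.eq]
  exact hA'.congr_of_eventuallyEq hFe

/-- Mean value inequality on `[a,b]` with derivative bounds in the interior. -/
theorem lip_bound {f f' : ℝ → ℝ} {a b K : ℝ} (hab : a ≤ b) (hc : ContinuousOn f (Icc a b))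
    (hd : ∀ t ∈ Ioo a b, HasDerivAt f (f' t) t) (hK : ∀ t ∈ Ioo a b, |f' t| ≤ K) :
    |f b - f a| ≤ K * (b - a) := by
  rcases hab.eq_or_lt with rfl | h
  · simp
  · obtain ⟨m, hm, he⟩ := exists_hasDerivAt_eq_slope f f' h hc hd
    have hpos : 0 < b - a := sub_pos.2 h
    have := hK m hm
    rw [he, abs_div, abs_of_pos hpos, div_le_iff₀ hpos] at this
    exact this

theorem core {φ G ξ : ℝ → ℝ → ℝ} {T ρ K C : ℝ} (hT : 0 < T) (hρ : 0 < ρ)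
    (hφ : ContDiffOn ℝ (⊤ : ℕ∞) (fun p : ℝ × ℝ => φ p.1 p.2) (opU T))
    (hφc : ∀ x > 0, ContinuousOn (fun t => φ x t) (Ico 0 T))
    (hG : ∀ x > 0, ∀ t ∈ Ioo (0:ℝ) T, HasDerivAt (fun u => φ x u) (G x t) t)
    (hK : ∀ x > ρ, ∀ t ∈ Ioo (0:ℝ) T, |G x t| ≤ K)
    (hC : ∀ x > ρ, ∀ t ∈ Ioo (0:ℝ) T, |deriv (fun y => G y t) x| ≤ C * ξ x t)
    (hC0 : 0 ≤ C)
    (hξ : ContDiffOn ℝ (⊤ : ℕ∞) (fun p : ℝ × ℝ => ξ p.1 p.2) (opU T))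
    (hξ0 : ∀ x > 0, ∀ t ∈ Ioo (0:ℝ) T, 0 < ξ x t)
    (hξt : ∀ x > ρ, ∀ t ∈ Ioo (0:ℝ) T, ∃ r, HasDerivAt (fun u => Real.log (ξ x u)) r t ∧ |r| ≤ 3)
    (hinf : Tendsto (fun x => φ x 0) atTop atTop) (R : ℝ) (hR : ρ < R) :
    ∃ x t' δ, R < x ∧ t' ∈ Ioo (0:ℝ) T ∧ 0 < δ ∧
      ∀ t ∈ Ico t' T, δ ≤ (ξ x t)⁻¹ * deriv (fun y => φ y t) x := by
  have hR0 : 0 < R := hρ.trans hR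
  have hT2 : T / 2 ∈ Ioo (0:ℝ) T := ⟨by linarith, by linarith⟩
  have hξlog : ∀ x > ρ, ∀ t ∈ Ico (T/2) T, |Real.log (ξ x t) - Real.log (ξ x (T/2))| ≤ 3 * T := by
    intro x hx t ht
    have hx0 : 0 < x := hρ.trans hx
    choose! r hr1 hr2 using hξt x hx
    have h := lip_bound (f := fun u => Real.log (ξ x u)) (f' := r) (K := 3) ht.1
      (fun u hu => (hr1 u ⟨hT2.1.trans_le hu.1, hu.2.trans_lt ht.2⟩).continuousAt.continuousWithinAt)
      (fun u hu => hr1 u ⟨hT2.1.trans hu.1, hu.2.trans ht.2⟩)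
      (fun u hu => hr2 u ⟨hT2.1.trans hu.1, hu.2.trans ht.2⟩)
    have := ht.2
    refine h.trans ?_
    linarith
  have hξup : ∀ x > ρ, ∀ t ∈ Ico (T/2) T, ξ x t ≤ ξ x (T/2) * Real.exp (3 * T) := by
    intro x hx t ht
    have hx0 : 0 < x := hρ.trans hx
    have h1 := hξ0 x hx0 t ⟨hT2.1.trans_le ht.1, ht.2⟩
    have h2 := hξ0 x hx0 _ hT2
    have h := (abs_le.1 (hξlog x hx t ht)).2
    calc ξ x t = Real.exp (Real.log (ξ x t)) := (Real.exp_log h1).symm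
      _ ≤ Real.exp (Real.log (ξ x (T/2)) + 3 * T) := Real.exp_le_exp.2 (by linarith)
      _ = _ := by rw [Real.exp_add, Real.exp_log h2]
  obtain ⟨xb, hxbR, hxb⟩ : ∃ xb, R + 1 < xb ∧ φ (R+1) 0 + 2 * (K * T) + 1 ≤ φ xb 0 :=
    ((eventually_gt_atTop (R+1)).and (hinf.eventually_ge_atTop _)).exists
  have hK0 : 0 ≤ K := (abs_nonneg _).trans (hK R hR _ hT2)
  have hφt : ∀ x > ρ, ∀ t ∈ Ioo (0:ℝ) T, |φ x t - φ x 0| ≤ K * T := by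
    intro x hx t ht
    have hx0 : 0 < x := hρ.trans hx
    have h := lip_bound (f := fun u => φ x u) (f' := G x) (K := K) ht.1.le
      ((hφc x hx0).mono fun u hu => ⟨hu.1, hu.2.trans_lt ht.2⟩)
      (fun u hu => hG x hx0 u ⟨hu.1, hu.2.trans ht.2⟩)
      (fun u hu => hK x hx u ⟨hu.1, hu.2.trans ht.2⟩)
    refine h.trans ?_
    have := ht.2
    gcongr
    linarith
  obtain ⟨M, hM⟩ : ∃ M, ∀ x ∈ Icc (R+1) xb, ξ x (T/2) ≤ M := by
    have hc : ContinuousOn (fun x => ξ x (T/2)) (Icc (R+1) xb) := fun x hx =>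
      (slice_x (diffAt_of hξ (p := (x, T/2))
        ⟨by have := hx.1; simp only [mem_Ioi]; linarith, hT2⟩)).continuousAt.continuousWithinAt
    obtain ⟨M, hM⟩ := isCompact_Icc.bddAbove_image hc
    exact ⟨M, fun x hx => hM (mem_image_of_mem _ hx)⟩
  have hM0 : 0 < M := (hξ0 (R+1) (by linarith) _ hT2).trans_le (hM _ ⟨le_rfl, hxbR.le⟩)
  set L := C * (M * Real.exp (3 * T)) with hL
  have hL0 : 0 ≤ L := by positivity
  set D := xb - (R+1) with hD
  have hD0 : 0 < D := by simp only [hD]; linarith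
  obtain ⟨t', ht'1, ht'2, ht'3⟩ : ∃ t', T/2 < t' ∧ t' < T ∧ L * (T - t') * D ≤ 1/2 := by
    have hlim : Tendsto (fun t' => L * (T - t') * D) (𝓝[<] T) (𝓝 0) := by
      have : Continuous (fun t' => L * (T - t') * D) := by fun_prop
      have h := (this.tendsto T).mono_left (nhdsWithin_le_nhds (s := Iio T))
      simpa using h
    have e1 := hlim.eventually (eventually_le_nhds (show (0:ℝ) < 1/2 by norm_num))
    have e2 : ∀ᶠ t' in 𝓝[<] T, t' ∈ Ioo (T/2) T := Ioo_mem_nhdsLT hT2.2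
    obtain ⟨t', h1, h2⟩ := (e1.and e2).exists
    exact ⟨t', h2.1, h2.2, h1⟩
  have ht' : t' ∈ Ioo (0:ℝ) T := ⟨hT2.1.trans ht'1, ht'2⟩
  obtain ⟨x, hx, hslope⟩ : ∃ x ∈ Ioo (R+1) xb,
      deriv (fun y => φ y t') x = (φ xb t' - φ (R+1) t') / (xb - (R+1)) := by
    have hd : ∀ y > 0, DifferentiableAt ℝ (fun y => φ y t') y := fun y hy =>
      (slice_x (diffAt_of hφ (p := (y, t')) ⟨hy, ht'⟩)).differentiableAt
    refine exists_deriv_eq_slope (fun y => φ y t') hxbR ?_ ?_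
    · intro y hy
      exact (hd y (by have := hy.1; linarith)).continuousAt.continuousWithinAt
    · intro y hy
      exact (hd y (by have := hy.1; linarith)).differentiableWithinAt
  have hxρ : ρ < x := by linarith [hx.1]
  have hx0 : 0 < x := hρ.trans hxρ
  have hpt' : 1 / D ≤ deriv (fun y => φ y t') x := by
    rw [hslope]
    have h1 := abs_le.1 (hφt xb (by linarith) t' ht')
    have h2 := abs_le.1 (hφt (R+1) (by linarith) t' ht')
    gcongr
    linarith [h1.1, h2.2]
  have hp : ∀ t ∈ Ico t' T, 1 / (2 * D) ≤ deriv (fun y => φ y t) x := by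
    intro t ht
    have hmix : ∀ u ∈ Ioo 0 T, HasDerivAt (fun u => deriv (fun y => φ y u) x)
      (deriv (fun y => G y u) x) u := fun u hu => mixed hφ hG hx0 hu
    have h := lip_bound (f := fun u => deriv (fun y => φ y u) x)
      (f' := fun u => deriv (fun y => G y u) x) (K := L) ht.1
      (fun u hu => (hmix u ⟨ht'.1.trans_le hu.1,
        hu.2.trans_lt ht.2⟩).continuousAt.continuousWithinAt)
      (fun u hu => hmix u ⟨ht'.1.trans hu.1, hu.2.trans ht.2⟩)
      (fun u hu => by
        refine (hC x hxρ u ⟨ht'.1.trans hu.1, hu.2.trans ht.2⟩).trans ?_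
        rw [hL]
        gcongr
        refine (hξup x hxρ u ⟨(ht'1.trans hu.1).le, hu.2.trans ht.2⟩).trans ?_
        gcongr
        exact hM x ⟨hx.1.le, hx.2.le⟩)
    have h1 := (abs_le.1 h).1
    have h2 : L * (t - t') ≤ L * (T - t') := by
      have := ht.2
      gcongr
    have h3 : L * (T - t') ≤ 1 / 2 / D := by rwa [le_div_iff₀ hD0]
    have h4 : 1 / D - 1 / 2 / D = 1 / (2 * D) := by field_simp; norm_num
    linarith
  set B := ξ x (T/2) * Real.exp (3 * T) with hB
  have hB0 : 0 < B := mul_pos (hξ0 x hx0 _ hT2) (Real.exp_pos _)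
  refine ⟨x, t', B⁻¹ * (1 / (2 * D)), by linarith [hx.1], ht', by positivity, fun t ht => ?_⟩
  have hpos := hξ0 x hx0 t ⟨ht'.1.trans_le ht.1, ht.2⟩
  have := hξup x hxρ t ⟨ht'1.le.trans ht.1, ht.2⟩
  have h5 := hp t ht
  gcongr

namespace WarpedBergerFlow

variable (F : WarpedBergerFlow)

theorem opU_sub : opU F.T ⊆ Ioi 0 ×ˢ Ico 0 F.T :=
  prod_mono le_rfl Ioo_subset_Ico_self

theorem ks_smooth :
    ContDiffOn ℝ (⊤ : ℕ∞) (fun p : ℝ × ℝ => F.k12 p.1 p.2) (opU F.T) ∧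
    ContDiffOn ℝ (⊤ : ℕ∞) (fun p : ℝ × ℝ => F.k13 p.1 p.2) (opU F.T) ∧
    ContDiffOn ℝ (⊤ : ℕ∞) (fun p : ℝ × ℝ => F.k01 p.1 p.2) (opU F.T) ∧
    ContDiffOn ℝ (⊤ : ℕ∞) (fun p : ℝ × ℝ => F.k03 p.1 p.2) (opU F.T) := by
  have hξ := F.smooth_ξ.mono F.opU_sub
  have hb := F.smooth_b.mono F.opU_sub
  have hc := F.smooth_c.mono F.opU_sub
  have nξ : ∀ p ∈ opU F.T, F.ξ p.1 p.2 ≠ 0 := fun p hp =>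
    (F.ξ_pos _ hp.1 _ (F.opU_sub hp).2).ne'
  have nb : ∀ p ∈ opU F.T, F.b p.1 p.2 ≠ 0 := fun p hp =>
    (F.b_pos _ hp.1 _ (F.opU_sub hp).2).ne'
  have nc : ∀ p ∈ opU F.T, F.c p.1 p.2 ≠ 0 := fun p hp =>
    (F.c_pos _ hp.1 _ (F.opU_sub hp).2).ne'
  have hbs := contDiffOn_dS hξ nξ hb
  have hcs := contDiffOn_dS hξ nξ hc
  have hbss := contDiffOn_dS hξ nξ hbs
  have hcss := contDiffOn_dS hξ nξ hcs
  unfold k12 k13 k01 k03 bS cS bSS cSS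
  refine ⟨?_, ?_, ?_, ?_⟩
  · exact (((contDiffOn_const.mul (hb.pow 2)).sub (contDiffOn_const.mul (hc.pow 2))).div
      (hb.pow 4) (fun p hp => pow_ne_zero _ (nb p hp))).sub
      ((hbs.pow 2).div (hb.pow 2) (fun p hp => pow_ne_zero _ (nb p hp)))
  · exact ((hc.pow 2).div (hb.pow 4) (fun p hp => pow_ne_zero _ (nb p hp))).sub
      ((hbs.mul hcs).div (hb.mul hc) (fun p hp => mul_ne_zero (nb p hp) (nc p hp)))
  · exact hbss.neg.div hb nb
  · exact hcss.neg.div hc nc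

theorem logb_t {x t : ℝ} (hx : 0 < x) (ht : t ∈ Ioo 0 F.T) :
    HasDerivAt (fun u => Real.log (F.b x u)) (-(F.k12 x t + F.k13 x t + F.k01 x t)) t := by
  have ht' := Ioo_subset_Ico_self ht
  have hb := F.b_pos x hx t ht'
  have hc := F.c_pos x hx t ht'
  have h := (slice_t (diffAt_of (F.smooth_b.mono F.opU_sub) (p := (x, t)) ⟨hx, ht⟩))
  have h' := h.differentiableAt.hasDerivAt
  rw [F.eq_b x hx t ht'] at h'
  convert h'.log hb.ne' using 1
  unfold k12 k13 k01 bS cS bSS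
  field_simp
  ring

theorem logc_t {x t : ℝ} (hx : 0 < x) (ht : t ∈ Ioo 0 F.T) :
    HasDerivAt (fun u => Real.log (F.c x u)) (-(F.k03 x t + 2 * F.k13 x t)) t := by
  have ht' := Ioo_subset_Ico_self ht
  have hb := F.b_pos x hx t ht'
  have hc := F.c_pos x hx t ht'
  have h := (slice_t (diffAt_of (F.smooth_c.mono F.opU_sub) (p := (x, t)) ⟨hx, ht⟩))
  have h' := h.differentiableAt.hasDerivAt
  rw [F.eq_c x hx t ht'] at h'
  convert h'.log hc.ne' using 1
  unfold k03 k13 bS cS cSS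
  field_simp
  ring

theorem logξ_t {x t : ℝ} (hx : 0 < x) (ht : t ∈ Ioo 0 F.T) :
    HasDerivAt (fun u => Real.log (F.ξ x u)) (2 * F.k01 x t + F.k03 x t) t := by
  have ht' := Ioo_subset_Ico_self ht
  have hb := F.b_pos x hx t ht'
  have hc := F.c_pos x hx t ht'
  have hξ := F.ξ_pos x hx t ht'
  have h := (slice_t (diffAt_of (F.smooth_ξ.mono F.opU_sub) (p := (x, t)) ⟨hx, ht⟩))
  have h' := h.differentiableAt.hasDerivAt
  rw [F.eq_ξ x hx t ht'] at h'
  convert h'.log hξ.ne' using 1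
  unfold k01 k03 bSS cSS
  field_simp
  ring

end WarpedBergerFlow

/-- for a warped Berger Ricci flow with `T < ∞`, no necks at `t = 0`,
`b(x,0) → ∞` and `b²c(x,0) → ∞` as `x → ∞`, `|Rm| ≤ 1` and uniformly bounded first
derivatives of the curvature outside radius `ρ` for all times, there exist
`x̃₂ ≥ x̃₁ > ρ`, `δ > 0` and `t̃ ∈ [0,T)` such that `b_s(x̃₁,t) ≥ δ` and `H(x̃₂,t) ≥ δ`
for every `t ∈ [t̃,T)`. -/
theorem warpedBerger_bs_H_positive_at_some_radius (F : WarpedBergerFlow)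
    (hBC : F.BoundedCurvature)
    (hbs0 : ∀ x > 0, 0 ≤ F.bS x 0) (hH0 : ∀ x > 0, 0 ≤ F.meanH x 0)
    (hb_infty : Filter.Tendsto (fun x => F.b x 0) Filter.atTop Filter.atTop)
    (hbbc_infty : Filter.Tendsto (fun x => (F.b x 0) ^ 2 * F.c x 0) Filter.atTop
      Filter.atTop)
    (ρ : ℝ) (hρ : 0 < ρ)
    (hRm : ∀ x ≥ ρ, ∀ t ∈ Set.Ico (0:ℝ) F.T, F.RmNorm x t ≤ 1)
    (hDRm : ∃ C : ℝ, ∀ x ≥ ρ, ∀ t ∈ Set.Ico (0:ℝ) F.T,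
      |dS F.ξ F.k12 x t| + |dS F.ξ F.k13 x t| + |dS F.ξ F.k01 x t|
        + |dS F.ξ F.k03 x t| ≤ C) :
    ∃ x₁ x₂ δ t', ρ < x₁ ∧ x₁ ≤ x₂ ∧ 0 < δ ∧ t' ∈ Set.Ico (0:ℝ) F.T ∧
      ∀ t ∈ Set.Ico t' F.T, δ ≤ F.bS x₁ t ∧ δ ≤ F.meanH x₂ t := by
  have hT := F.T_pos
  obtain ⟨C₀, hC₀⟩ := hDRm
  have hC₀0 : 0 ≤ C₀ := le_trans (by positivity) (hC₀ ρ le_rfl 0 ⟨le_rfl, hT⟩)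
  have sξ := F.smooth_ξ.mono F.opU_sub
  have sb := F.smooth_b.mono F.opU_sub
  have sc := F.smooth_c.mono F.opU_sub
  have nb : ∀ p ∈ opU F.T, F.b p.1 p.2 ≠ 0 := fun p hp =>
    (F.b_pos _ hp.1 _ (F.opU_sub hp).2).ne'
  have nc : ∀ p ∈ opU F.T, F.c p.1 p.2 ≠ 0 := fun p hp =>
    (F.c_pos _ hp.1 _ (F.opU_sub hp).2).ne'
  have slb : ContDiffOn ℝ (⊤ : ℕ∞) (fun p : ℝ × ℝ => Real.log (F.b p.1 p.2)) (opU F.T) :=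
    sb.log nb
  have slc : ContDiffOn ℝ (⊤ : ℕ∞) (fun p : ℝ × ℝ => Real.log (F.c p.1 p.2)) (opU F.T) :=
    sc.log nc
  have hξ0 : ∀ x > 0, ∀ t ∈ Ioo (0:ℝ) F.T, 0 < F.ξ x t := fun x hx t ht =>
    F.ξ_pos x hx t (Ioo_subset_Ico_self ht)
  have pathc : ∀ x > (0:ℝ), ContinuousOn (fun t : ℝ => (x, t)) (Ico 0 F.T) := fun x _ => by fun_prop
  have pathm : ∀ x > (0:ℝ), MapsTo (fun t : ℝ => (x, t)) (Ico 0 F.T) (Ioi 0 ×ˢ Ico 0 F.T) :=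
    fun x hx t ht => ⟨hx, ht⟩
  have clb : ∀ x > 0, ContinuousOn (fun t => Real.log (F.b x t)) (Ico 0 F.T) := fun x hx =>
    (F.smooth_b.continuousOn.comp (pathc x hx) (pathm x hx)).log
      (fun t ht => (F.b_pos x hx t ht).ne')
  have clc : ∀ x > 0, ContinuousOn (fun t => Real.log (F.c x t)) (Ico 0 F.T) := fun x hx =>
    (F.smooth_c.continuousOn.comp (pathc x hx) (pathm x hx)).log
      (fun t ht => (F.c_pos x hx t ht).ne')
  have kb : ∀ x > ρ, ∀ t ∈ Ioo (0:ℝ) F.T,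
      |F.k12 x t| ≤ 1 ∧ |F.k13 x t| ≤ 1 ∧ |F.k01 x t| ≤ 1 ∧ |F.k03 x t| ≤ 1 := by
    intro x hx t ht
    have h := hRm x (le_of_lt hx) t (Ioo_subset_Ico_self ht)
    unfold WarpedBergerFlow.RmNorm at h
    have h1 := abs_nonneg (F.k12 x t)
    have h2 := abs_nonneg (F.k13 x t)
    have h3 := abs_nonneg (F.k01 x t)
    have h4 := abs_nonneg (F.k03 x t)
    refine ⟨?_, ?_, ?_, ?_⟩ <;> linarith
  obtain ⟨sk12, sk13, sk01, sk03⟩ := F.ks_smooth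
  have db : ∀ k : ℝ → ℝ → ℝ, ∀ x > ρ, ∀ t ∈ Ioo (0:ℝ) F.T, |dS F.ξ k x t| ≤ C₀ →
      |deriv (fun y => k y t) x| ≤ C₀ * F.ξ x t := by
    intro k x hx t ht h
    have hp := hξ0 x (hρ.trans hx) t ht
    unfold dS at h
    rw [abs_mul, abs_of_pos (inv_pos.2 hp), inv_mul_le_iff₀ hp] at h
    linarith
  have dks : ∀ x > ρ, ∀ t ∈ Ioo (0:ℝ) F.T,
      |deriv (fun y => F.k12 y t) x| ≤ C₀ * F.ξ x t ∧
      |deriv (fun y => F.k13 y t) x| ≤ C₀ * F.ξ x t ∧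
      |deriv (fun y => F.k01 y t) x| ≤ C₀ * F.ξ x t ∧
      |deriv (fun y => F.k03 y t) x| ≤ C₀ * F.ξ x t := by
    intro x hx t ht
    have h := hC₀ x (le_of_lt hx) t (Ioo_subset_Ico_self ht)
    have h1 := abs_nonneg (dS F.ξ F.k12 x t)
    have h2 := abs_nonneg (dS F.ξ F.k13 x t)
    have h3 := abs_nonneg (dS F.ξ F.k01 x t)
    have h4 := abs_nonneg (dS F.ξ F.k03 x t)
    refine ⟨?_, ?_, ?_, ?_⟩ <;> refine db _ x hx t ht ?_ <;> linarith
  have hasd : ∀ k : ℝ → ℝ → ℝ,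
      ContDiffOn ℝ (⊤ : ℕ∞) (fun p : ℝ × ℝ => k p.1 p.2) (opU F.T) →
      ∀ x > ρ, ∀ t ∈ Ioo (0:ℝ) F.T,
      HasDerivAt (fun y => k y t) (deriv (fun y => k y t) x) x := fun k hk x hx t ht =>
    (slice_x (diffAt_of hk (p := (x, t)) ⟨hρ.trans hx, ht⟩)).differentiableAt.hasDerivAt
  have hξt : ∀ x > ρ, ∀ t ∈ Ioo (0:ℝ) F.T,
      ∃ r, HasDerivAt (fun u => Real.log (F.ξ x u)) r t ∧ |r| ≤ 3 := by
    intro x hx t ht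
    refine ⟨_, F.logξ_t (hρ.trans hx) ht, ?_⟩
    obtain ⟨-, -, h3, h4⟩ := kb x hx t ht
    rw [abs_le] at *
    constructor <;> linarith [h3.1, h3.2, h4.1, h4.2]
  obtain ⟨x₁, t₁, δ₁, hx₁, ht₁, hδ₁, H₁⟩ := core (φ := fun x t => Real.log (F.b x t))
    (G := fun x t => -(F.k12 x t + F.k13 x t + F.k01 x t)) (ξ := F.ξ) (K := 3) (C := 3 * C₀)
    hT hρ slb clb (fun x hx t ht => F.logb_t hx ht)
    (by
      intro x hx t ht
      obtain ⟨h1, h2, h3, -⟩ := kb x hx t ht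
      rw [abs_le] at *
      constructor <;> linarith [h1.1, h1.2, h2.1, h2.2, h3.1, h3.2])
    (by
      intro x hx t ht
      obtain ⟨h1, h2, h3, -⟩ := dks x hx t ht
      have e := ((((hasd _ sk12 x hx t ht).fun_add (hasd _ sk13 x hx t ht)).fun_add
        (hasd _ sk01 x hx t ht)).fun_neg).deriv
      rw [e]
      rw [abs_le] at *
      constructor <;> linarith [h1.1, h1.2, h2.1, h2.2, h3.1, h3.2])
    (by positivity) sξ hξ0 hξt (Real.tendsto_log_atTop.comp hb_infty) (ρ + 1) (by linarith)
  have hinf2 : Tendsto (fun x => 2 * Real.log (F.b x 0) + Real.log (F.c x 0)) atTop atTop := by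
    refine (Real.tendsto_log_atTop.comp hbbc_infty).congr' ?_
    filter_upwards [eventually_gt_atTop 0] with x hx
    have h1 := (F.b_pos x hx 0 ⟨le_rfl, hT⟩).ne'
    have h2 := (F.c_pos x hx 0 ⟨le_rfl, hT⟩).ne'
    simp only [Function.comp]
    rw [Real.log_mul (pow_ne_zero _ h1) h2, Real.log_pow]
    norm_num
  obtain ⟨x₂, t₂, δ₂, hx₂, ht₂, hδ₂, H₂⟩ := core
    (φ := fun x t => 2 * Real.log (F.b x t) + Real.log (F.c x t))
    (G := fun x t => 2 * (-(F.k12 x t + F.k13 x t + F.k01 x t)) + (-(F.k03 x t + 2 * F.k13 x t)))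
    (ξ := F.ξ) (K := 9) (C := 9 * C₀)
    hT hρ ((contDiffOn_const.mul slb).add slc)
    (fun x hx => (continuousOn_const.mul (clb x hx)).add (clc x hx))
    (fun x hx t ht => ((F.logb_t hx ht).const_mul 2).fun_add (F.logc_t hx ht))
    (by
      intro x hx t ht
      obtain ⟨h1, h2, h3, h4⟩ := kb x hx t ht
      rw [abs_le] at *
      constructor <;> linarith [h1.1, h1.2, h2.1, h2.2, h3.1, h3.2, h4.1, h4.2])
    (by
      intro x hx t ht
      obtain ⟨h1, h2, h3, h4⟩ := dks x hx t ht
      have e := ((((((hasd _ sk12 x hx t ht).fun_add (hasd _ sk13 x hx t ht)).fun_add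
        (hasd _ sk01 x hx t ht)).fun_neg).const_mul 2).fun_add
        (((hasd _ sk03 x hx t ht).fun_add ((hasd _ sk13 x hx t ht).const_mul 2)).fun_neg)).deriv
      rw [e]
      rw [abs_le] at *
      constructor <;> linarith [h1.1, h1.2, h2.1, h2.2, h3.1, h3.2, h4.1, h4.2])
    (by positivity) sξ hξ0 hξt hinf2 x₁ (by linarith)
  have hx₁ρ : ρ < x₁ := by linarith
  have hx₁0 : 0 < x₁ := hρ.trans hx₁ρ
  have hx₂0 : 0 < x₂ := hx₁0.trans hx₂
  have hbl : ∀ t ∈ Ico t₁ F.T, F.b x₁ t₁ * Real.exp (-(3 * F.T)) ≤ F.b x₁ t := by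
    intro t ht
    have hb1 := F.b_pos x₁ hx₁0 t₁ (Ioo_subset_Ico_self ht₁)
    have hbt := F.b_pos x₁ hx₁0 t ⟨ht₁.1.le.trans ht.1, ht.2⟩
    have h := lip_bound (f := fun u => Real.log (F.b x₁ u))
      (f' := fun t => -(F.k12 x₁ t + F.k13 x₁ t + F.k01 x₁ t)) (K := 3) ht.1
      ((clb x₁ hx₁0).mono fun u hu => ⟨ht₁.1.le.trans hu.1, hu.2.trans_lt ht.2⟩)
      (fun u hu => F.logb_t hx₁0 ⟨ht₁.1.trans hu.1, hu.2.trans ht.2⟩)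
      (fun u hu => by
        obtain ⟨h1, h2, h3, -⟩ := kb x₁ hx₁ρ u ⟨ht₁.1.trans hu.1, hu.2.trans ht.2⟩
        rw [abs_le] at *
        constructor <;> linarith [h1.1, h1.2, h2.1, h2.2, h3.1, h3.2])
    have h1 := (abs_le.1 h).1
    have h2 := ht.2
    have h3 := ht₁.1
    calc F.b x₁ t₁ * Real.exp (-(3 * F.T))
        = Real.exp (Real.log (F.b x₁ t₁) + -(3 * F.T)) := by
          rw [Real.exp_add, Real.exp_log hb1]
      _ ≤ Real.exp (Real.log (F.b x₁ t)) := Real.exp_le_exp.2 (by linarith)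
      _ = F.b x₁ t := Real.exp_log hbt
  set β := F.b x₁ t₁ * Real.exp (-(3 * F.T)) with hβ
  have hβ0 : 0 < β := mul_pos (F.b_pos x₁ hx₁0 t₁ (Ioo_subset_Ico_self ht₁)) (Real.exp_pos _)
  refine ⟨x₁, x₂, min (β * δ₁) δ₂, max t₁ t₂, hx₁ρ, hx₂.le, lt_min (by positivity) hδ₂,
    ⟨ht₁.1.le.trans (le_max_left _ _), max_lt ht₁.2 ht₂.2⟩, fun t ht => ?_⟩
  have htT : t ∈ Ioo 0 F.T := ⟨ht₁.1.trans_le ((le_max_left _ _).trans ht.1), ht.2⟩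
  have ht1 : t ∈ Ico t₁ F.T := ⟨(le_max_left _ _).trans ht.1, ht.2⟩
  have ht2 : t ∈ Ico t₂ F.T := ⟨(le_max_right _ _).trans ht.1, ht.2⟩
  have hdb : ∀ x > 0, HasDerivAt (fun y => F.b y t) (deriv (fun y => F.b y t) x) x :=
    fun x hx => (slice_x (diffAt_of sb (p := (x, t)) ⟨hx, htT⟩)).differentiableAt.hasDerivAt
  have hdc : ∀ x > 0, HasDerivAt (fun y => F.c y t) (deriv (fun y => F.c y t) x) x :=
    fun x hx => (slice_x (diffAt_of sc (p := (x, t)) ⟨hx, htT⟩)).differentiableAt.hasDerivAt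
  constructor
  · have hb := F.b_pos x₁ hx₁0 t (Ioo_subset_Ico_self htT)
    have h := H₁ t ht1
    rw [((hdb x₁ hx₁0).log hb.ne').deriv] at h
    have h2 := hbl t ht1
    have e : F.bS x₁ t =
        F.b x₁ t * ((F.ξ x₁ t)⁻¹ * (deriv (fun y => F.b y t) x₁ / F.b x₁ t)) := by
      unfold WarpedBergerFlow.bS dS
      field_simp
    refine (min_le_left _ _).trans ?_
    rw [e]
    gcongr
  · have hb := F.b_pos x₂ hx₂0 t (Ioo_subset_Ico_self htT)
    have hc := F.c_pos x₂ hx₂0 t (Ioo_subset_Ico_self htT)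
    have h := H₂ t ht2
    rw [((((hdb x₂ hx₂0).log hb.ne').const_mul 2).fun_add ((hdc x₂ hx₂0).log hc.ne')).deriv] at h
    refine (min_le_right _ _).trans (h.trans (le_of_eq ?_))
    unfold WarpedBergerFlow.meanH WarpedBergerFlow.bS WarpedBergerFlow.cS dS
    ring
end
end
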